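/- Assume φ satisfies the LSCC property and is geodesically convex (geodesically λ-convex with λ = 0), and let u_ε be a minimizer of I_ε over 𝒜_ū^ε for some ū ∈ D(φ). Then: (1) t ↦ (1/2)|u_ε'|²(t) admits a locally Lipschitz continuous pointwise representative on (0,∞); (2) t ↦ |u_ε'|(t) and t ↦ φ(u_ε(t)) are nonincreasing; (3) t ↦ φ(u_ε(t)) is convex; (4) in the sense of distributions on (0,∞), −ε d²/dt² ( (1/2)|u_ε'|²(t) ) + d/dt (1/2)|u_ε'|²(t) = −d²/dt² φ(u_ε(t)) − d/dt (1/2)|u_ε'|²(t) ≤ 0. Consequently, t ↦ φ(u_ε(t)) is continuous on (0,∞) and right-continuous at t = 0. -/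

import Mathlib

/-!
Finer properties of minimizers of the weighted energy-dissipation functional of a geodesically
convex energy `φ`. Everything is obtained by comparing the minimizer `u` with competitors; no
differential structure on `X` is available.

*Energy along the arc length.* Replacing a piece of `u` by the geodesic with the same end points,
run with the arc length profile of `u` rescaled to the length of the geodesic, does not increase
the dissipation. Together with minimality this shows that `φ ∘ u` is a convex function of the
arc length `x(t) = ∫₀ᵗ |u'|` (`Setting.arc_convex`), and a comparison with the curve stopped at
the points of lower energy shows that it is nonincreasing (`Setting.en_antitone`).

*First integral.* Reparametrizing time (`Setting.inner_variation`, `Setting.weak_form`) and the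
du Bois-Reymond lemma give a constant `C` with
`φ(u(t)) - (ε/2)|u'|²(t) + ∫₀ᵗ |u'|² = C` for a.e. `t > 0` (`Setting.first_integral`). Solving for
`|u'|²/2` defines the representative `Setting.kin`; convexity of `φ ∘ u` in the arc length makes it
locally Lipschitz (`Setting.kin_lip`).

*Monotonicity.* Write `φ(u(t)) = ψ(x(t))` with `ψ` convex and nonincreasing, and `v = |u'|`.
Differentiating the first integral gives formally `ε v' = v + ψ'(x)`, where `ψ'(x(t))` is
nondecreasing. Hence `v` is convex as a function of `e^{t/ε}`: it lies above functions
`α e^{t/ε} - k` touching it (`Setting.support`). If such an `α` were positive, `v` would grow like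
`e^{t/ε}`, contradicting the integrability of `e^{-t/ε} v²`; so `v` is nonincreasing
(`Setting.spd_anti`). Then `x` is concave, and `φ ∘ u = ψ ∘ x` is convex (`Setting.en_convex`).

*Distributional relations.* The equality is the first integral tested against second derivatives
(`Setting.distrib_eq`). The inequality says that `v²/2` is convex in `e^{t/ε}`; it is derived from
the finite difference form of that convexity (`Setting.kin_convex`) by differentiating twice in the
shift (`weak_convex`, `Setting.distrib_ineq`).
-/


open MeasureTheory Filter Topology Set ENNReal

noncomputable section

namespace WED

variable {X : Type*} [MetricSpace X]

/-- The exponential probability measure `μ_ε = ε⁻¹ e^{-t/ε} dt` on `(0,∞)`. -/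
def expMeasure (ε : ℝ) : Measure ℝ :=
  (volume.restrict (Ioi (0:ℝ))).withDensity fun t => ENNReal.ofReal (ε⁻¹ * Real.exp (-t / ε))

/-- The positive part of an extended real, as an extended nonnegative real. -/
def epos (x : EReal) : ℝ≥0∞ := if x = ⊤ then ⊤ else ENNReal.ofReal x.toReal

/-- The absolute value of an extended real, as an extended nonnegative real. -/
def eabs (x : EReal) : ℝ≥0∞ := epos x ⊔ epos (-x)

/-- The (extended-real valued) integral of an extended-real valued function, defined as the
difference between the integrals of the positive and of the negative part. -/
def eIntegral (μ : Measure ℝ) (f : ℝ → EReal) : EReal :=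
  ((∫⁻ t, epos (f t) ∂μ : ℝ≥0∞) : EReal) - ((∫⁻ t, epos (-f t) ∂μ : ℝ≥0∞) : EReal)

/-- `m` is *the* metric derivative of the curve `u` on the set `I ⊆ ℝ`:  `m` is a nonnegative
locally integrable function, `d(u s, u t) ≤ ∫_s^t m` (so that `u` is absolutely continuous),
and `m t` is the limit of the difference quotients `d(u s, u t)/|s-t|` at a.e. `t ∈ I`. -/
structure IsMetricDerivOn (u : ℝ → X) (m : ℝ → ℝ) (I : Set ℝ) : Prop where
  nonneg : ∀ t, 0 ≤ m t
  locInt : ∀ s ∈ I, ∀ t ∈ I, IntegrableOn m (Icc s t) volume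
  dist_le : ∀ s ∈ I, ∀ t ∈ I, s ≤ t → dist (u s) (u t) ≤ ∫ r in Icc s t, m r
  limit : ∀ᵐ t ∂(volume.restrict I),
    Tendsto (fun s => dist (u s) (u t) / |s - t|) (𝓝[I \ {t}] t) (𝓝 (m t))

/-- `u ∈ AC²_loc(I; X)`, with metric derivative `m`. -/
def AC2LocOn (u : ℝ → X) (m : ℝ → ℝ) (I : Set ℝ) : Prop :=
  IsMetricDerivOn u m I ∧ ∀ s ∈ I, ∀ t ∈ I, IntegrableOn (fun r => m r ^ 2) (Icc s t) volume

/-- `u ∈ AC²(I; X)`, with metric derivative `m`. -/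
def AC2On (u : ℝ → X) (m : ℝ → ℝ) (I : Set ℝ) : Prop :=
  IsMetricDerivOn u m I ∧ IntegrableOn (fun r => m r ^ 2) I volume

/-- The integrand `(ε/2)|u'|²(t) + φ(u(t))` of the WED functional. -/
def wedIntegrand (φ : X → EReal) (ε : ℝ) (u : ℝ → X) (m : ℝ → ℝ) (t : ℝ) : EReal :=
  ((ε / 2 * m t ^ 2 : ℝ) : EReal) + φ (u t)

/-- The WED functional `I_ε[u] = ∫₀^∞ ((ε/2)|u'|² + φ(u)) dμ_ε`. -/
def WEDfun (φ : X → EReal) (ε : ℝ) (u : ℝ → X) (m : ℝ → ℝ) : EReal :=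
  eIntegral (expMeasure ε) (wedIntegrand φ ε u m)

/-- The admissible class `𝒜_x^ε`: curves `u ∈ AC²_loc([0,∞);X)` (with metric derivative `m`)
with `u 0 = x` and `∫₀^∞ |u'|² dμ_ε < ∞`. -/
def Admissible (ε : ℝ) (x : X) (u : ℝ → X) (m : ℝ → ℝ) : Prop :=
  u 0 = x ∧ AC2LocOn u m (Ici 0) ∧
    (∫⁻ t, ENNReal.ofReal (m t ^ 2) ∂expMeasure ε) < ⊤

/-- The value function `V_ε(x) = inf { I_ε[u] : u ∈ 𝒜_x^ε }`. -/
def Veps (φ : X → EReal) (ε : ℝ) (x : X) : EReal :=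
  ⨅ (p : {p : (ℝ → X) × (ℝ → ℝ) // Admissible ε x p.1 p.2}),
    WEDfun φ ε p.1.1 p.1.2

/-- `u` (with metric derivative `m`) minimizes the WED functional `I_ε` over `𝒜_x^ε`. -/
def IsMinimizer (φ : X → EReal) (ε : ℝ) (x : X) (u : ℝ → X) (m : ℝ → ℝ) : Prop :=
  Admissible ε x u m ∧
    ∀ v n, Admissible ε x v n → WEDfun φ ε u m ≤ WEDfun φ ε v n

/-- The compatibility conditions (MT1), (MT2) between the distance `d` and the auxiliary
topology `σ`. -/
structure Compatible (σ : TopologicalSpace X) : Prop where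
  mt1 : ∀ (u v : ℕ → X) (x y : X), Tendsto u atTop (@nhds X σ x) →
    Tendsto v atTop (@nhds X σ y) →
    ENNReal.ofReal (dist x y) ≤ Filter.liminf (fun n => ENNReal.ofReal (dist (u n) (v n))) atTop
  mt2 : ∀ U : Set X, IsOpen[σ] U → ∀ x ∈ U, ∃ V : Set X, IsOpen[σ] V ∧ x ∈ V ∧
    ∃ δ : ℝ, 0 < δ ∧ ∀ y : X, Metric.infDist y V < δ → y ∈ U

/-- The standard lower semicontinuity–compactness–coercivity (LSCC) assumptions on a proper
functional `φ : X → (-∞,∞]`, with respect to the auxiliary topology `σ`. -/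
structure LSCC (σ : TopologicalSpace X) (φ : X → EReal) (ustar : X) (A B : ℝ) : Prop where
  hA : 0 ≤ A
  hB : 0 ≤ B
  proper : ∃ x, φ x ≠ ⊤
  ne_bot : ∀ x, φ x ≠ ⊥
  lsc : ∀ (u : ℕ → X) (x : X), (∃ C : ℝ, ∀ n k, dist (u n) (u k) ≤ C) →
    Tendsto u atTop (@nhds X σ x) → φ x ≤ Filter.liminf (fun n => φ (u n)) atTop
  cpt : ∀ u : ℕ → X, (∃ C : ℝ, ∀ n, φ (u n) ≤ (C : EReal)) →
    (∃ C : ℝ, ∀ n k, dist (u n) (u k) ≤ C) →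
    ∃ (x : X) (j : ℕ → ℕ), StrictMono j ∧ Tendsto (u ∘ j) atTop (@nhds X σ x)
  coercive : ∀ u v : X, ((-(B * dist u v ^ 2 + (B * dist v ustar ^ 2 + A)) : ℝ) : EReal) ≤ φ u

/-- The local (descending) slope `|∂φ|(x) = limsup_{v→x} (φ(x)-φ(v))⁺/d(x,v)`. -/
def slope (φ : X → EReal) (x : X) : ℝ≥0∞ :=
  Filter.limsup (fun v => epos (φ x - φ v) / ENNReal.ofReal (dist x v)) (𝓝[≠] x)

/-- The relaxed slope `|∂⁻φ|`: the σ-sequential lower semicontinuous envelope of the local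
slope along `d`-bounded sequences with bounded energy. -/
def relaxedSlope (σ : TopologicalSpace X) (φ : X → EReal) (x : X) : ℝ≥0∞ :=
  ⨅ (u : ℕ → X) (_ : Tendsto u atTop (@nhds X σ x))
    (_ : ∃ C : ℝ, ∀ n, dist (u n) x ≤ C ∧ φ (u n) ≤ (C : EReal)),
    Filter.liminf (fun n => slope φ (u n)) atTop

/-- `G_ε(x) = sqrt(2(φ(x) - V_ε(x))/ε)` if `V_ε(x) < ∞`, and `∞` otherwise. -/
def Geps (φ : X → EReal) (ε : ℝ) (x : X) : ℝ≥0∞ :=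
  if Veps φ ε x = ⊤ then ⊤
  else (2 * epos (φ x - Veps φ ε x) / ENNReal.ofReal ε) ^ (1/2 : ℝ)

/-- The measure `|u'| dt` on `I` associated with the speed `m` of a curve. -/
def speedMeasure (m : ℝ → ℝ) (I : Set ℝ) : Measure ℝ :=
  (volume.restrict I).withDensity fun t => ENNReal.ofReal (m t)

/-- Membership in `L^p(μ)`, `p ∈ [1,∞]`, for an `ℝ≥0∞`-valued function. -/
def MemLpENN (f : ℝ → ℝ≥0∞) (p : ℝ≥0∞) (μ : Measure ℝ) : Prop :=
  if p = ⊤ then ∃ C : ℝ≥0∞, C ≠ ⊤ ∧ ∀ᵐ t ∂μ, f t ≤ C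
  else (∫⁻ t, f t ^ p.toReal ∂μ) < ⊤

/-- `g` is an `L^p`-moderated upper gradient for `φ`: for every absolutely continuous curve
`u` (with metric derivative `m`) on a compact interval such that `φ∘u ∈ L^p(|u'|dt)` and
`g∘u ∈ L¹(|u'|dt)`, one has `|φ(u t) - φ(u s)| ≤ ∫_s^t g(u r) |u'|(r) dr`. -/
def IsModeratedUpperGradient (φ : X → EReal) (g : X → ℝ≥0∞) (p : ℝ≥0∞) : Prop :=
  ∀ (a b : ℝ), a ≤ b → ∀ (u : ℝ → X) (m : ℝ → ℝ), IsMetricDerivOn u m (Icc a b) →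
    MemLpENN (fun t => eabs (φ (u t))) p (speedMeasure m (Icc a b)) →
    (∫⁻ t in Icc a b, g (u t) * ENNReal.ofReal (m t)) < ⊤ →
    ∀ s ∈ Icc a b, ∀ t ∈ Icc a b, s ≤ t →
      (φ (u t) ≤ φ (u s) + ((∫⁻ r in Icc s t, g (u r) * ENNReal.ofReal (m r) : ℝ≥0∞) : EReal) ∧
       φ (u s) ≤ φ (u t) + ((∫⁻ r in Icc s t, g (u r) * ENNReal.ofReal (m r) : ℝ≥0∞) : EReal))

/-- A real function `f` is locally absolutely continuous on `[0,∞)` with density `g`. -/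
def RealACLoc (f g : ℝ → ℝ) : Prop :=
  (∀ b : ℝ, 0 ≤ b → IntegrableOn g (Icc 0 b) volume) ∧
  ∀ t : ℝ, 0 ≤ t → f t = f 0 + ∫ r in Icc 0 t, g r

/-- A real function `f` belongs to `AC²_loc([0,∞);ℝ)`, with derivative `g`. -/
def RealAC2Loc (f g : ℝ → ℝ) : Prop :=
  RealACLoc f g ∧ ∀ b : ℝ, 0 ≤ b → IntegrableOn (fun t => g t ^ 2) (Icc 0 b) volume

/-- The compact-open topology on curves `[0,∞) → X` induced by the auxiliary topology `σ`. -/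
def compactOpenOf (σ : TopologicalSpace X) : TopologicalSpace (ℝ → X) :=
  TopologicalSpace.generateFrom
    {S | ∃ (K : Set ℝ) (U : Set X), K ⊆ Ici 0 ∧ IsCompact K ∧ IsOpen[σ] U ∧
      S = {f : ℝ → X | MapsTo f K U}}

/-- The WED slope `|∂_w φ|(x) = limsup_{ε↓0} G_ε(x)`. -/
def wedSlope (φ : X → EReal) (x : X) : ℝ≥0∞ :=
  Filter.limsup (fun ε => Geps φ ε x) (𝓝[>] (0:ℝ))

/-- The relaxed WED slope `|∂_w^- φ|`. -/
def relaxedWedSlope (σ : TopologicalSpace X) (φ : X → EReal) (x : X) : ℝ≥0∞ :=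
  ⨅ (u : ℕ → X) (_ : Tendsto u atTop (@nhds X σ x))
    (_ : ∃ C : ℝ, ∀ n, dist (u n) x ≤ C ∧ φ (u n) ≤ (C : EReal)),
    Filter.liminf (fun n => wedSlope φ (u n)) atTop

/-- The φ-conditioned local slope `|∂̃ψ|(x) = limsup_{v→x, φ(v)→φ(x)} (ψ(x)-ψ(v))⁺/d(x,v)`. -/
def condSlope (φ ψ : X → EReal) (x : X) : ℝ≥0∞ :=
  Filter.limsup (fun v => epos (ψ x - ψ v) / ENNReal.ofReal (dist x v))
    ((𝓝[≠] x) ⊓ Filter.comap φ (𝓝 (φ x)))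

/-- `φ` is geodesically `λ`-convex: every pair of points of `D(φ)` is joined by a
constant-speed geodesic along which `φ` is `λ`-convex. -/
def GeodesicLambdaConvex (φ : X → EReal) (lam : ℝ) : Prop :=
  ∀ v₀ v₁ : X, φ v₀ ≠ ⊤ → φ v₁ ≠ ⊤ → ∃ γ : ℝ → X, γ 0 = v₀ ∧ γ 1 = v₁ ∧
    (∀ s ∈ Icc (0:ℝ) 1, ∀ t ∈ Icc (0:ℝ) 1, dist (γ s) (γ t) = |t - s| * dist v₀ v₁) ∧
    ∀ t ∈ Icc (0:ℝ) 1, φ (γ t) ≤ ((1 - t : ℝ) : EReal) * φ v₀ + ((t : ℝ) : EReal) * φ v₁ -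
      ((lam / 2 * t * (1 - t) * dist v₀ v₁ ^ 2 : ℝ) : EReal)

end WED

namespace WED

/-! ### Lower semicontinuity, extended integrals and the exponential measure -/

/-- Metric lower semicontinuity of `φ`: by (MT2) the auxiliary topology is coarser than the metric
one, so the sequential lower semicontinuity of (LSCC) applies to metrically convergent sequences. -/
lemma lsc_of_LSCC {X : Type*} [MetricSpace X] {σ : TopologicalSpace X} (hcomp : Compatible σ)
    {φ : X → EReal} {ustar : X} {A B : ℝ} (hφ : LSCC σ φ ustar A B) (x : X) (y : EReal)
    (hy : y < φ x) : ∃ δ > 0, ∀ z, dist z x < δ → y < φ z := by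
  by_contra! hcon
  choose v hv hvy using fun n : ℕ => hcon (1 / ((n:ℝ) + 1)) (by positivity)
  have hlim : Tendsto (fun n => dist (v n) x) atTop (𝓝 0) :=
    squeeze_zero (fun _ => dist_nonneg) (fun n => (hv n).le) tendsto_one_div_add_atTop_nhds_zero_nat
  have hbd : ∃ C : ℝ, ∀ n k, dist (v n) (v k) ≤ C := by
    refine ⟨1 + 1, fun n k => (dist_triangle_right _ _ x).trans ?_⟩
    have h1 : ∀ n : ℕ, dist (v n) x ≤ 1 := fun n => (hv n).le.trans (by
      rw [div_le_one (by positivity)]; linarith [n.cast_nonneg (α := ℝ)])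
    exact add_le_add (h1 n) (h1 k)
  have hσ : Tendsto v atTop (@nhds X σ x) := by
    intro s hs
    obtain ⟨U, hUs, hU, hxU⟩ := (@_root_.mem_nhds_iff X σ x s).1 hs
    obtain ⟨V, hV, hxV, δ, hδ, h⟩ := hcomp.mt2 U hU x hxU
    rw [Filter.mem_map]
    filter_upwards [hlim.eventually (gt_mem_nhds hδ)] with n hn
    exact hUs (h _ ((Metric.infDist_le_dist_of_mem hxV).trans_lt hn))
  have h1 := hφ.lsc v x hbd hσ
  have h2 : liminf (fun n => φ (v n)) atTop ≤ y :=
    Filter.liminf_le_of_frequently_le' (Frequently.of_forall hvy)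
  exact absurd (h1.trans h2) (not_le.2 hy)

lemma epos_eq (x : EReal) : epos x = x.toENNReal := rfl

lemma eIntegral_mono {μ : Measure ℝ} {f g : ℝ → EReal} (h : ∀ᵐ t ∂μ, f t ≤ g t) :
    eIntegral μ f ≤ eIntegral μ g := by
  unfold eIntegral
  refine EReal.sub_le_sub ?_ ?_
  · refine EReal.coe_ennreal_le_coe_ennreal_iff.2 (lintegral_mono_ae ?_)
    filter_upwards [h] with t ht using EReal.toENNReal_le_toENNReal ht
  · refine EReal.coe_ennreal_le_coe_ennreal_iff.2 (lintegral_mono_ae ?_)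
    filter_upwards [h] with t ht using EReal.toENNReal_le_toENNReal (EReal.neg_le_neg_iff.2 ht)

lemma eIntegral_coe {μ : Measure ℝ} {h : ℝ → ℝ} (hh : Integrable h μ) :
    eIntegral μ (fun t => (h t : EReal)) = ((∫ t, h t ∂μ : ℝ) : EReal) := by
  have e1 : ∀ t, epos (h t : EReal) = ENNReal.ofReal (h t) := fun t => by
    simp [epos_eq, EReal.toENNReal]
  have e2 : ∀ t, epos (-(h t : EReal)) = ENNReal.ofReal (-h t) := fun t => by
    rw [← EReal.coe_neg]; simp only [epos_eq, EReal.toENNReal]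
    rw [if_neg (EReal.coe_ne_top _), EReal.toReal_coe]
  unfold eIntegral
  simp only [e1, e2]
  have f1 := hh.lintegral_lt_top.ne
  have f2 := hh.neg.lintegral_lt_top.ne
  simp only [Pi.neg_apply] at f2
  rw [integral_eq_lintegral_pos_part_sub_lintegral_neg_part hh, EReal.coe_sub]
  rw [← EReal.coe_ennreal_toReal f1, ← EReal.coe_ennreal_toReal f2]

/-- The density of `expMeasure ε` on `(0,∞)`. -/
def wt (ε t : ℝ) : ℝ := ε⁻¹ * Real.exp (-t / ε)

lemma wt_pos {ε : ℝ} (hε : 0 < ε) (t : ℝ) : 0 < wt ε t := by unfold wt; positivity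

lemma continuous_wt (ε : ℝ) : Continuous (wt ε) := by unfold wt; fun_prop

lemma expMeasure_eq (ε : ℝ) : expMeasure ε =
    (volume.restrict (Ioi (0:ℝ))).withDensity fun t => ENNReal.ofReal (wt ε t) := rfl

lemma integrable_exp_iff {ε : ℝ} (hε : 0 < ε) {g : ℝ → ℝ} :
    Integrable g (expMeasure ε) ↔ IntegrableOn (fun t => wt ε t * g t) (Ioi 0) := by
  rw [expMeasure_eq, integrable_withDensity_iff_integrable_smul'
    (continuous_wt ε).measurable.ennreal_ofReal (by simp)]
  simp [ENNReal.toReal_ofReal (wt_pos hε _).le, IntegrableOn]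

lemma integral_exp_eq {ε : ℝ} (hε : 0 < ε) (g : ℝ → ℝ) :
    ∫ t, g t ∂(expMeasure ε) = ∫ t in Ioi 0, wt ε t * g t := by
  rw [expMeasure_eq, integral_withDensity_eq_integral_toReal_smul
    (continuous_wt ε).measurable.ennreal_ofReal (by simp)]
  simp [ENNReal.toReal_ofReal (wt_pos hε _).le]

lemma ae_exp_iff {ε : ℝ} (hε : 0 < ε) {p : ℝ → Prop} :
    (∀ᵐ t ∂(expMeasure ε), p t) ↔ ∀ᵐ t ∂(volume.restrict (Ioi (0:ℝ))), p t := by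
  rw [expMeasure_eq, ae_withDensity_iff (continuous_wt ε).measurable.ennreal_ofReal]
  simp [wt_pos hε]

lemma exp_abs (ε : ℝ) : expMeasure ε ≪ volume.restrict (Ioi (0:ℝ)) :=
  withDensity_absolutelyContinuous _ _

lemma integrableOn_wt {ε : ℝ} (hε : 0 < ε) : IntegrableOn (wt ε) (Ioi 0) := by
  have := (integrableOn_exp_mul_Ioi (a := -ε⁻¹) (by simpa using hε) 0).const_mul ε⁻¹
  refine this.congr (Eventually.of_forall fun t => ?_)
  simp only [wt]; congr 2; ring

lemma finite_exp {ε : ℝ} (hε : 0 < ε) : IsFiniteMeasure (expMeasure ε) := by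
  have : Integrable (fun _ : ℝ => (1:ℝ)) (expMeasure ε) := by
    rw [integrable_exp_iff hε]; simpa using integrableOn_wt hε
  simpa [integrable_const_iff] using this

lemma exp_pos_Ioo {ε a b : ℝ} (hε : 0 < ε) (ha : 0 ≤ a) (hab : a < b) :
    expMeasure ε (Ioo a b) ≠ 0 := by
  intro h
  have h1 : ∀ᵐ t ∂(expMeasure ε), t ∉ Ioo a b := by
    rw [ae_iff]; simp only [not_not]; exact h
  rw [ae_exp_iff hε, ae_iff, Measure.restrict_apply' measurableSet_Ioi] at h1
  have h2 : volume (Ioo a b) ≤ 0 := by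
    rw [← h1]; apply measure_mono; intro t ht
    exact ⟨by simpa using ht, lt_of_le_of_lt ha ht.1⟩
  simp at h2; linarith

/-- On compact subintervals of `[0,∞)` the density of `expMeasure ε` is bounded below. -/
lemma intOn_of_exp {ε : ℝ} (hε : 0 < ε) {g : ℝ → ℝ} (hg : Integrable g (expMeasure ε)) (b : ℝ) :
    IntegrableOn g (Icc 0 b) := by
  rw [integrable_exp_iff hε] at hg
  rw [integrableOn_Icc_iff_integrableOn_Ioc]
  have h1 : IntegrableOn (fun t => wt ε t * g t) (Ioc 0 b) := hg.mono_set Ioc_subset_Ioi_self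
  rw [← integrableOn_Icc_iff_integrableOn_Ioc] at h1 ⊢
  have h2 : ContinuousOn (fun t => (wt ε t)⁻¹) (Icc 0 b) :=
    ((continuous_wt ε).inv₀ (fun t => (wt_pos hε t).ne')).continuousOn
  have h3 := IntegrableOn.continuousOn_mul h2 h1 isCompact_Icc
  refine h3.congr (Eventually.of_forall fun t => ?_)
  simp [← mul_assoc, inv_mul_cancel₀ (wt_pos hε t).ne']

end WED

namespace WED

/-! ### Absolutely continuous curves and a Hardy-type inequality -/

/-- Integration by parts against the primitive of an integrable function. -/
lemma parts_AC {g η η' : ℝ → ℝ} {a b c : ℝ} (hg : IntervalIntegrable g volume a b)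
    (hc : c ∈ uIcc a b) (hη : ∀ t, HasDerivAt η (η' t) t) (hη' : Continuous η') :
    ∫ t in a..b, (∫ s in c..t, g s) * η' t =
      (∫ s in c..b, g s) * η b - (∫ s in c..a, g s) * η a - ∫ t in a..b, g t * η t := by
  have h1 := hg.absolutelyContinuousOnInterval_intervalIntegral hc
  have hd : deriv η = η' := funext fun t => (hη t).deriv
  have hC : ContDiff ℝ 1 η := by
    rw [contDiff_one_iff_deriv]
    exact ⟨fun t => (hη t).differentiableAt, hd ▸ hη'⟩
  have h2 : AbsolutelyContinuousOnInterval η a b :=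
    hC.contDiffOn.absolutelyContinuousOnInterval
  have h3 := h1.integral_mul_deriv_eq_deriv_mul h2
  rw [hd] at h3
  rw [h3]
  congr 1
  apply intervalIntegral.integral_congr_ae
  filter_upwards [hg.ae_hasDerivAt_integral] with t ht hmem
  rw [(ht (uIoc_subset_uIcc hmem) c hc).deriv]

section curves
variable {X : Type*} [MetricSpace X] {u : ℝ → X} {m : ℝ → ℝ}

lemma IsMetricDerivOn.ii (h : IsMetricDerivOn u m (Ici 0)) {a b : ℝ} (ha : 0 ≤ a) (hb : 0 ≤ b) :
    IntervalIntegrable m volume a b := by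
  have h1 : ∀ c : ℝ, 0 ≤ c → IntervalIntegrable m volume 0 c := fun c hc => by
    rw [intervalIntegrable_iff_integrableOn_Icc_of_le hc]
    exact h.locInt 0 self_mem_Ici c hc
  exact (h1 a ha).symm.trans (h1 b hb)

/-- The arc length `∫₀ᵗ m` of a curve with speed `m`. -/
def arc (m : ℝ → ℝ) (t : ℝ) : ℝ := ∫ r in (0:ℝ)..t, m r

@[simp] lemma arc_zero (m : ℝ → ℝ) : arc m 0 = 0 := by simp [arc]

lemma IsMetricDerivOn.arc_sub (h : IsMetricDerivOn u m (Ici 0)) {a b : ℝ} (ha : 0 ≤ a)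
    (hb : 0 ≤ b) : arc m b - arc m a = ∫ r in a..b, m r :=
  intervalIntegral.integral_interval_sub_left (h.ii le_rfl hb) (h.ii le_rfl ha)

lemma IsMetricDerivOn.dist_arc (h : IsMetricDerivOn u m (Ici 0)) {a b : ℝ} (ha : 0 ≤ a)
    (hab : a ≤ b) : dist (u a) (u b) ≤ arc m b - arc m a := by
  rw [h.arc_sub ha (ha.trans hab), intervalIntegral.integral_of_le hab,
    ← integral_Icc_eq_integral_Ioc]
  exact h.dist_le a ha b (ha.trans hab) hab

lemma IsMetricDerivOn.arc_mono (h : IsMetricDerivOn u m (Ici 0)) {a b : ℝ} (ha : 0 ≤ a)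
    (hab : a ≤ b) : arc m a ≤ arc m b := by
  have := h.dist_arc ha hab
  linarith [dist_nonneg (x := u a) (y := u b)]

lemma IsMetricDerivOn.arc_cont (h : IsMetricDerivOn u m (Ici 0)) (b : ℝ) (hb : 0 ≤ b) :
    ContinuousOn (arc m) (Icc 0 b) := by
  have := (h.ii le_rfl hb).absolutelyContinuousOnInterval_intervalIntegral
    (c := 0) (by simp)
  have h2 := this.continuousOn
  rw [uIcc_of_le hb] at h2
  exact h2

lemma IsMetricDerivOn.arc_contOn (h : IsMetricDerivOn u m (Ici 0)) :
    ContinuousOn (arc m) (Ici 0) := by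
  intro t ht
  have h1 := h.arc_cont (t + 1) (by linarith [mem_Ici.1 ht]) t ⟨ht, by linarith⟩
  refine h1.mono_of_mem_nhdsWithin ?_
  rw [mem_nhdsWithin]
  exact ⟨Iio (t+1), isOpen_Iio, by simp, fun s hs => ⟨hs.2, hs.1.le⟩⟩

lemma IsMetricDerivOn.cont (h : IsMetricDerivOn u m (Ici 0)) : ContinuousOn u (Ici 0) := by
  have hle : ∀ s t : ℝ, 0 ≤ s → 0 ≤ t → dist (u s) (u t) ≤ |arc m s - arc m t| := by
    intro s t hs ht
    rcases le_total s t with hst | hst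
    · rw [abs_sub_comm]; exact (h.dist_arc hs hst).trans (le_abs_self _)
    · rw [dist_comm]; exact (h.dist_arc ht hst).trans (le_abs_self _)
  intro t ht
  rw [ContinuousWithinAt, tendsto_iff_dist_tendsto_zero]
  have h1 : Tendsto (fun s => |arc m s - arc m t|) (𝓝[Ici 0] t) (𝓝 0) := by
    have := ((h.arc_contOn t ht).sub_const (arc m t)).abs
    simpa using this
  refine squeeze_zero' (Eventually.of_forall fun _ => dist_nonneg) ?_ h1
  filter_upwards [self_mem_nhdsWithin] with s hs using hle s t hs ht

lemma IsMetricDerivOn.aemeas (h : IsMetricDerivOn u m (Ici 0)) :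
    AEMeasurable m (volume.restrict (Ioi (0:ℝ))) := by
  have : Ioi (0:ℝ) = ⋃ n : ℕ, Ioc (0:ℝ) n := by
    ext t; simp only [mem_Ioi, mem_iUnion, mem_Ioc]
    exact ⟨fun ht => (exists_nat_ge t).imp fun n hn => ⟨ht, hn⟩, fun ⟨n, hn⟩ => hn.1⟩
  rw [this, aemeasurable_iUnion_iff]
  intro n
  exact ((h.ii le_rfl n.cast_nonneg).1).aemeasurable

lemma IsMetricDerivOn.arc_ae_deriv (h : IsMetricDerivOn u m (Ici 0)) :
    ∀ᵐ t ∂(volume.restrict (Ioi (0:ℝ))), HasDerivAt (arc m) (m t) t := by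
  rw [ae_restrict_iff' measurableSet_Ioi]
  have : ∀ n : ℕ, ∀ᵐ t, t ∈ uIcc (0:ℝ) n → HasDerivAt (arc m) (m t) t := fun n => by
    filter_upwards [(h.ii le_rfl n.cast_nonneg).ae_hasDerivAt_integral] with t ht hmem
    exact ht hmem 0 (by simp)
  filter_upwards [ae_all_iff.2 this] with t ht h0
  obtain ⟨n, hn⟩ := exists_nat_ge t
  exact ht n (by rw [uIcc_of_le n.cast_nonneg]; exact ⟨le_of_lt h0, hn⟩)

/-- Hardy's inequality with exponential weight: `∫ (∫₀ᵗ m)² dμ_ε ≤ 4ε² ∫ m² dμ_ε < ∞`. -/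
lemma hardy {ε : ℝ} (hε : 0 < ε) (h : AC2LocOn u m (Ici 0))
    (hm2 : Integrable (fun t => m t ^ 2) (expMeasure ε)) :
    Integrable (fun t => arc m t ^ 2) (expMeasure ε) := by
  rw [integrable_exp_iff hε] at hm2 ⊢
  have hcont : ∀ T : ℝ, 0 ≤ T → ContinuousOn (fun t => wt ε t * arc m t ^ 2) (Icc 0 T) :=
    fun T hT => (continuous_wt ε).continuousOn.mul ((h.1.arc_cont T hT).pow 2)
  refine integrableOn_Ioi_of_intervalIntegral_norm_bounded
    (4 * ε ^ 2 * ∫ t in Ioi 0, wt ε t * m t ^ 2) 0 (b := fun n : ℕ => (n:ℝ)) (l := atTop)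
    (fun n => ?_) tendsto_natCast_atTop_atTop (Eventually.of_forall fun n => ?_)
  · exact ((hcont n n.cast_nonneg).integrableOn_Icc).mono_set Ioc_subset_Icc_self
  have hT : (0:ℝ) ≤ (n:ℝ) := n.cast_nonneg
  generalize (n:ℝ) = T at hT ⊢
  have hnorm : ∫ t in (0:ℝ)..T, ‖wt ε t * arc m t ^ 2‖ = ∫ t in (0:ℝ)..T, wt ε t * arc m t ^ 2 := by
    congr 1; ext t
    exact Real.norm_of_nonneg (mul_nonneg (wt_pos hε t).le (sq_nonneg _))
  rw [hnorm]
  have hac := (h.1.ii le_rfl hT).absolutelyContinuousOnInterval_intervalIntegral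
    (c := 0) (by simp)
  have hac2 := hac.fun_mul hac
  have hwd : ∀ t, HasDerivAt (wt ε) (-ε⁻¹ * wt ε t) t := fun t => by
    have h1 : HasDerivAt (fun t : ℝ => -t / ε) (-1 / ε) t := ((hasDerivAt_id t).neg).div_const ε
    have := (h1.exp).const_mul ε⁻¹
    refine this.congr_deriv ?_
    simp only [wt]; ring
  have hwC : ContDiff ℝ 1 (wt ε) := by unfold wt; fun_prop
  have hp := hac2.integral_mul_deriv_eq_deriv_mul
    (hwC.contDiffOn.absolutelyContinuousOnInterval (a := 0) (b := T))
  have e1 : ∫ t in (0:ℝ)..T, deriv (fun x => (∫ v in (0:ℝ)..x, m v) * ∫ v in (0:ℝ)..x, m v) t * wt ε t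
      = ∫ t in (0:ℝ)..T, 2 * (arc m t * m t) * wt ε t := by
    apply intervalIntegral.integral_congr_ae
    filter_upwards [(h.1.ii le_rfl hT).ae_hasDerivAt_integral] with t ht hmem
    have h0 := ht (uIoc_subset_uIcc hmem) 0 (by simp)
    rw [(h0.fun_mul h0).deriv]; simp only [arc]; ring
  have e2 : ∫ t in (0:ℝ)..T, ((∫ v in (0:ℝ)..t, m v) * ∫ v in (0:ℝ)..t, m v) * deriv (wt ε) t
      = -ε⁻¹ * ∫ t in (0:ℝ)..T, wt ε t * arc m t ^ 2 := by
    rw [← intervalIntegral.integral_const_mul]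
    congr 1; ext t; rw [(hwd t).deriv]; simp only [arc]; ring
  rw [e1, e2] at hp
  simp only [intervalIntegral.integral_same, mul_zero, zero_mul, sub_zero] at hp
  have hi1 : IntervalIntegrable (fun t => wt ε t * arc m t ^ 2) volume 0 T :=
    (hcont T hT).intervalIntegrable_of_Icc hT
  have hi2 : IntervalIntegrable (fun t => wt ε t * m t ^ 2) volume 0 T := by
    rw [intervalIntegrable_iff_integrableOn_Ioc_of_le hT]
    exact hm2.mono_set Ioc_subset_Ioi_self
  have hi3 : IntervalIntegrable (fun t => 2 * (arc m t * m t) * wt ε t) volume 0 T := by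
    have : ContinuousOn (fun t => 2 * arc m t * wt ε t) (uIcc 0 T) := by
      rw [uIcc_of_le hT]
      exact (continuousOn_const.mul (h.1.arc_cont T hT)).mul (continuous_wt ε).continuousOn
    refine ((h.1.ii le_rfl hT).continuousOn_mul this).congr ?_
    intro t _; simp only; ring
  -- Young's inequality absorbs half of the left-hand side.
  have hyoung : ∫ t in (0:ℝ)..T, 2 * (arc m t * m t) * wt ε t ≤
      ∫ t in (0:ℝ)..T, ((2 * ε)⁻¹ * (wt ε t * arc m t ^ 2) + 2 * ε * (wt ε t * m t ^ 2)) := by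
    refine intervalIntegral.integral_mono_on hT hi3
      ((hi1.const_mul _).add (hi2.const_mul _)) fun t _ => ?_
    have hw := (wt_pos hε t).le
    have : 2 * (arc m t * m t) ≤ (2 * ε)⁻¹ * arc m t ^ 2 + 2 * ε * m t ^ 2 := by
      have : 0 ≤ (2 * ε)⁻¹ * (arc m t - 2 * ε * m t) ^ 2 := by positivity
      have e : (2 * ε)⁻¹ * (arc m t - 2 * ε * m t) ^ 2 =
        (2 * ε)⁻¹ * arc m t ^ 2 + 2 * ε * m t ^ 2 - 2 * (arc m t * m t) := by
        field_simp; ring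
      linarith
    nlinarith
  rw [intervalIntegral.integral_add (hi1.const_mul _) (hi2.const_mul _),
    intervalIntegral.integral_const_mul, intervalIntegral.integral_const_mul] at hyoung
  have hmono : ∫ t in (0:ℝ)..T, wt ε t * m t ^ 2 ≤ ∫ t in Ioi 0, wt ε t * m t ^ 2 := by
    rw [intervalIntegral.integral_of_le hT]
    exact setIntegral_mono_set hm2 (Eventually.of_forall fun t =>
      mul_nonneg (wt_pos hε t).le (sq_nonneg _)) Ioc_subset_Ioi_self.eventuallyLE
  have hT2 : 0 ≤ (∫ v in (0:ℝ)..T, m v) * (∫ v in (0:ℝ)..T, m v) * wt ε T :=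
    mul_nonneg (mul_self_nonneg _) (wt_pos hε T).le
  set P := ∫ t in (0:ℝ)..T, wt ε t * arc m t ^ 2
  set Q := ∫ t in (0:ℝ)..T, wt ε t * m t ^ 2
  have h5 : ε⁻¹ * P ≤ (2 * ε)⁻¹ * P + 2 * ε * Q := by linarith
  have h6 : P ≤ 4 * ε ^ 2 * Q := by
    have : ε * (ε⁻¹ * P) ≤ ε * ((2 * ε)⁻¹ * P + 2 * ε * Q) := by gcongr
    field_simp at this
    nlinarith
  have : 4 * ε ^ 2 * Q ≤ 4 * ε ^ 2 * ∫ t in Ioi 0, wt ε t * m t ^ 2 := by gcongr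
  linarith

end curves

end WED

namespace WED

/-! ### Integrability along a minimizer and comparison with competitors -/

/-- The standing assumptions on a minimizer, with the auxiliary topology eliminated: `φ` is
metrically lower semicontinuous, quadratically bounded below and geodesically convex. -/
structure Setting {X : Type*} [MetricSpace X] (φ : X → EReal) (ε : ℝ) (ubar : X) (u : ℝ → X)
    (m : ℝ → ℝ) : Prop where
  hε : 0 < ε
  lsc : ∀ x y, y < φ x → ∃ δ > 0, ∀ z, dist z x < δ → y < φ z
  ne_bot : ∀ x, φ x ≠ ⊥
  coer : ∃ (x₀ : X) (A B : ℝ), 0 ≤ B ∧ ∀ x, ((-(B * dist x x₀ ^ 2 + A) : ℝ) : EReal) ≤ φ x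
  conv : GeodesicLambdaConvex φ 0
  fin0 : φ ubar ≠ ⊤
  adm : Admissible ε ubar u m
  isMin : ∀ v n, Admissible ε ubar v n → WEDfun φ ε u m ≤ WEDfun φ ε v n

namespace Setting

variable {X : Type*} [MetricSpace X] {φ : X → EReal} {ε : ℝ} {ubar : X} {u : ℝ → X} {m : ℝ → ℝ}

lemma md (H : Setting φ ε ubar u m) : IsMetricDerivOn u m (Ici 0) := H.adm.2.1.1

lemma lscU (H : Setting φ ε ubar u m) : LowerSemicontinuous (fun t : ℝ => φ (u (max t 0))) := by
  have hc : Continuous (fun t : ℝ => u (max t 0)) :=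
    H.md.cont.comp_continuous (by fun_prop) (fun t => mem_Ici.2 (le_max_right _ _))
  intro t y hy
  obtain ⟨δ, hδ, h⟩ := H.lsc _ y hy
  have := hc.continuousAt (x := t)
  rw [Metric.continuousAt_iff] at this
  obtain ⟨r, hr, h'⟩ := this δ hδ
  filter_upwards [Metric.ball_mem_nhds t hr] with s hs
  exact h _ (h' hs)

lemma phi_meas (H : Setting φ ε ubar u m) : Measurable (fun t : ℝ => φ (u (max t 0))) :=
  H.lscU.measurable

lemma phi_aemeas (H : Setting φ ε ubar u m) :
    AEMeasurable (fun t : ℝ => φ (u t)) (volume.restrict (Ioi 0)) := by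
  refine ⟨_, H.phi_meas, ?_⟩
  filter_upwards [ae_restrict_mem measurableSet_Ioi] with t ht
  rw [max_eq_left (le_of_lt ht)]

lemma sq_meas {ε : ℝ} {u : ℝ → X} {m : ℝ → ℝ} (h : IsMetricDerivOn u m (Ici 0)) :
    AEStronglyMeasurable (fun t => m t ^ 2) (expMeasure ε) :=
  ((h.aemeas.pow_const 2).mono_ac (exp_abs ε)).aestronglyMeasurable

lemma _root_.WED.Admissible.sq_int {ε : ℝ} {x : X} {v : ℝ → X} {n : ℝ → ℝ}
    (h : Admissible ε x v n) : Integrable (fun t => n t ^ 2) (expMeasure ε) :=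
  (lintegral_ofReal_ne_top_iff_integrable (sq_meas h.2.1.1)
    (Eventually.of_forall fun _ => sq_nonneg _)).1 h.2.2.ne

/-- The quadratic lower bound makes the negative part of the integrand integrable: by `hardy`,
`d(u t, x₀)²` is dominated by an integrable function. -/
lemma lower (H : Setting φ ε ubar u m) : ∃ g : ℝ → ℝ, Integrable g (expMeasure ε) ∧ (∀ t, 0 ≤ g t) ∧
    ∀ t, 0 ≤ t → ((-g t : ℝ) : EReal) ≤ φ (u t) := by
  obtain ⟨x₀, A, B, hB, h⟩ := H.coer
  have := finite_exp H.hε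
  have hh := hardy H.hε H.adm.2.1 H.adm.sq_int
  refine ⟨fun t => B * (2 * dist (u 0) x₀ ^ 2 + 2 * arc m t ^ 2) + |A|, ?_, fun t => by positivity, ?_⟩
  · exact (((integrable_const _).add (hh.const_mul 2)).const_mul B).add (integrable_const _)
  · intro t ht
    refine le_trans (EReal.coe_le_coe_iff.2 ?_) (h (u t))
    have h1 : dist (u t) x₀ ≤ dist (u 0) x₀ + arc m t := by
      have := H.md.dist_arc le_rfl ht
      rw [arc_zero] at this
      linarith [dist_triangle_left (u t) x₀ (u 0)]
    have h2 : dist (u t) x₀ ^ 2 ≤ 2 * dist (u 0) x₀ ^ 2 + 2 * arc m t ^ 2 := by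
      have := pow_le_pow_left₀ dist_nonneg h1 2
      nlinarith [sq_nonneg (dist (u 0) x₀ - arc m t)]
    have h3 := mul_le_mul_of_nonneg_left h2 hB
    linarith [le_abs_self A]

lemma const_adm {ε : ℝ} (x : X) : Admissible ε x (fun _ => x) (fun _ => 0) := by
  refine ⟨rfl, ⟨⟨fun _ => le_rfl, fun s _ t _ => by simp, fun s _ t _ _ => by simp, ?_⟩,
    fun s _ t _ => by simp⟩, by simp⟩
  exact Eventually.of_forall fun t => by simpa using tendsto_const_nhds

lemma wed_aemeas (H : Setting φ ε ubar u m) :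
    AEMeasurable (wedIntegrand φ ε u m) (expMeasure ε) := by
  refine AEMeasurable.mono_ac ?_ (exp_abs ε)
  unfold wedIntegrand
  exact ((H.md.aemeas.pow_const 2).const_mul (ε/2)).coe_real_ereal.add H.phi_aemeas

lemma wed_int (H : Setting φ ε ubar u m) :
    (∀ᵐ t ∂(expMeasure ε), φ (u t) ≠ ⊤) ∧
    Integrable (fun t => (φ (u t)).toReal) (expMeasure ε) := by
  have := finite_exp H.hε
  obtain ⟨g, hg, hg0, hgφ⟩ := H.lower
  have hpos : ∀ᵐ t ∂(expMeasure ε), 0 < t :=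
    (ae_exp_iff H.hε).2 (ae_restrict_mem measurableSet_Ioi)
  have hN : (∫⁻ t, epos (-wedIntegrand φ ε u m t) ∂(expMeasure ε)) ≠ ⊤ := by
    refine ne_top_of_le_ne_top hg.lintegral_lt_top.ne (lintegral_mono_ae ?_)
    filter_upwards [hpos] with t ht
    have h1 : -wedIntegrand φ ε u m t ≤ ((g t : ℝ) : EReal) := by
      rw [EReal.neg_le, ← EReal.coe_neg]
      refine (hgφ t ht.le).trans ?_
      unfold wedIntegrand
      nth_rewrite 1 [← zero_add (φ (u t))]
      refine add_le_add_left (EReal.coe_nonneg.2 ?_) _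
      have := H.hε
      positivity
    have h2 := EReal.toENNReal_le_toENNReal h1
    refine h2.trans (le_of_eq ?_)
    simp [EReal.toENNReal]
  have hle := H.isMin _ _ (const_adm ubar)
  have hconst : WEDfun φ ε (fun _ => ubar) (fun _ => 0) =
      ((∫ t, (φ ubar).toReal ∂(expMeasure ε) : ℝ) : EReal) := by
    unfold WEDfun
    rw [← eIntegral_coe (integrable_const _)]
    congr 1
    funext t
    simp [wedIntegrand, EReal.coe_toReal H.fin0 (H.ne_bot _)]
  have hP : (∫⁻ t, epos (wedIntegrand φ ε u m t) ∂(expMeasure ε)) ≠ ⊤ := by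
    intro htop
    rw [hconst] at hle
    unfold WEDfun eIntegral at hle
    rw [htop, ← EReal.coe_ennreal_toReal hN] at hle
    rw [EReal.coe_ennreal_top, EReal.top_sub_coe] at hle
    exact absurd hle (not_le.2 (EReal.coe_lt_top _))
  have hfin : ∀ᵐ t ∂(expMeasure ε), φ (u t) ≠ ⊤ := by
    have h0 : AEMeasurable (fun t => epos (wedIntegrand φ ε u m t)) (expMeasure ε) :=
      measurable_ereal_toENNReal.comp_aemeasurable H.wed_aemeas
    filter_upwards [ae_lt_top' h0 hP] with t ht hc
    rw [wedIntegrand, hc, EReal.coe_add_top, epos, if_pos rfl] at ht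
    exact lt_irrefl _ ht
  refine ⟨hfin, ?_⟩
  have hfm : AEStronglyMeasurable (fun t => (φ (u t)).toReal) (expMeasure ε) :=
    (measurable_ereal_toReal.comp_aemeasurable
      (H.phi_aemeas.mono_ac (exp_abs ε))).aestronglyMeasurable
  have hF : Integrable (fun t => ε / 2 * m t ^ 2 + (φ (u t)).toReal) (expMeasure ε) := by
    refine ⟨(H.adm.sq_int.aestronglyMeasurable.const_mul _).add hfm, ?_⟩
    rw [hasFiniteIntegral_iff_norm]
    have hb : ∀ᵐ t ∂(expMeasure ε),
        ENNReal.ofReal ‖ε / 2 * m t ^ 2 + (φ (u t)).toReal‖ ≤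
          epos (wedIntegrand φ ε u m t) + ENNReal.ofReal (g t) := by
      filter_upwards [hpos, hfin] with t ht hft
      have e : wedIntegrand φ ε u m t = ((ε / 2 * m t ^ 2 + (φ (u t)).toReal : ℝ) : EReal) := by
        rw [EReal.coe_add, EReal.coe_toReal hft (H.ne_bot _)]; rfl
      have hl : -g t ≤ (φ (u t)).toReal := by
        have := hgφ t ht.le
        rw [← EReal.coe_toReal hft (H.ne_bot _)] at this
        exact EReal.coe_le_coe_iff.1 this
      have : epos (wedIntegrand φ ε u m t) = ENNReal.ofReal (ε / 2 * m t ^ 2 + (φ (u t)).toReal) := by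
        rw [e]; simp only [epos]; rw [if_neg (EReal.coe_ne_top _), EReal.toReal_coe]
      rw [this, Real.norm_eq_abs]
      have hq : 0 ≤ ε / 2 * m t ^ 2 := by have := H.hε; positivity
      rcases le_total 0 (ε / 2 * m t ^ 2 + (φ (u t)).toReal) with h | h
      · rw [abs_of_nonneg h]; exact le_self_add
      · rw [abs_of_nonpos h]
        exact (ENNReal.ofReal_le_ofReal (by linarith)).trans le_add_self
    refine (lintegral_mono_ae hb).trans_lt ?_
    rw [lintegral_add_right' _ hg.aestronglyMeasurable.aemeasurable.ennreal_ofReal]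
    exact ENNReal.add_lt_top.2 ⟨hP.lt_top, hg.lintegral_lt_top⟩
  have := hF.sub (H.adm.sq_int.const_mul (ε/2))
  refine this.congr (Eventually.of_forall fun t => ?_)
  simp

/-- The integrand along the minimizer as a real function. -/
def F (φ : X → EReal) (ε : ℝ) (u : ℝ → X) (m : ℝ → ℝ) (t : ℝ) : ℝ :=
  ε / 2 * m t ^ 2 + (φ (u t)).toReal

lemma F_int (H : Setting φ ε ubar u m) : Integrable (F φ ε u m) (expMeasure ε) :=
  (H.adm.sq_int.const_mul (ε/2)).add H.wed_int.2

lemma wed_eq (H : Setting φ ε ubar u m) :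
    ∀ᵐ t ∂(expMeasure ε), wedIntegrand φ ε u m t = ((F φ ε u m t : ℝ) : EReal) := by
  filter_upwards [H.wed_int.1] with t hft
  rw [F, EReal.coe_add, EReal.coe_toReal hft (H.ne_bot _)]; rfl

/-- Minimality tested with a competitor that differs from `u` only on `S` and whose integrand is
bounded there by an integrable function. -/
lemma compare (H : Setting φ ε ubar u m) {v : ℝ → X} {n : ℝ → ℝ} (hv : Admissible ε ubar v n)
    {S : Set ℝ} (hS : MeasurableSet S) (hoff : ∀ t, 0 < t → t ∉ S → v t = u t ∧ n t = m t)
    {h : ℝ → ℝ} (hh : IntegrableOn h S (expMeasure ε))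
    (hle : ∀ᵐ t ∂(expMeasure ε), t ∈ S → wedIntegrand φ ε v n t ≤ (h t : EReal)) :
    ∫ t in S, F φ ε u m t ∂(expMeasure ε) ≤ ∫ t in S, h t ∂(expMeasure ε) := by
  classical
  have hpos : ∀ᵐ t ∂(expMeasure ε), 0 < t :=
    (ae_exp_iff H.hε).2 (ae_restrict_mem measurableSet_Ioi)
  set K : ℝ → ℝ := S.piecewise h (F φ ε u m) with hK
  have hKi : Integrable K (expMeasure ε) :=
    Integrable.piecewise hS hh H.F_int.integrableOn
  have h1 : WEDfun φ ε u m = ((∫ t, F φ ε u m t ∂(expMeasure ε) : ℝ) : EReal) := by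
    rw [← eIntegral_coe H.F_int]
    exact le_antisymm (eIntegral_mono (H.wed_eq.mono fun t ht => ht.le))
      (eIntegral_mono (H.wed_eq.mono fun t ht => ht.ge))
  have h2 : WEDfun φ ε v n ≤ ((∫ t, K t ∂(expMeasure ε) : ℝ) : EReal) := by
    rw [← eIntegral_coe hKi]
    refine eIntegral_mono ?_
    filter_upwards [hle, hpos, H.wed_eq] with t ht h0 he
    by_cases hts : t ∈ S
    · simpa [hK, hts] using ht hts
    · obtain ⟨e1, e2⟩ := hoff t h0 hts
      rw [hK, piecewise_eq_of_notMem _ _ _ hts, ← he]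
      simp [wedIntegrand, e1, e2]
  have h3 := (H.isMin v n hv).trans h2
  rw [h1, EReal.coe_le_coe_iff, ← integral_add_compl hS H.F_int, ← integral_add_compl hS hKi,
    setIntegral_congr_fun hS (fun t ht => by rw [hK, piecewise_eq_of_mem _ _ _ ht] :
      EqOn K h S),
    setIntegral_congr_fun hS.compl (fun t ht => by rw [hK, piecewise_eq_of_notMem _ _ _ ht] :
      EqOn K (F φ ε u m) Sᶜ)] at h3
  linarith

end Setting

end WED

namespace WED

/-! ### Geodesic shortcuts and convexity in the arc-length variable -/

namespace Setting

variable {X : Type*} [MetricSpace X] {φ : X → EReal} {ε : ℝ} {ubar : X} {u : ℝ → X} {m : ℝ → ℝ}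

lemma punctured {t : ℝ} (ht : 0 < t) : 𝓝[Ici (0:ℝ) \ {t}] t = 𝓝[≠] t := by
  have : Ici (0:ℝ) \ {t} = {t}ᶜ ∩ Ici 0 := by ext s; simp [and_comm]
  rw [this]
  exact nhdsWithin_inter_of_mem' (mem_nhdsWithin_of_mem_nhds (Ici_mem_nhds ht))

lemma lim_iff {v : ℝ → X} {n : ℝ → ℝ} :
    (∀ᵐ t ∂(volume.restrict (Ici (0:ℝ))),
      Tendsto (fun s => dist (v s) (v t) / |s - t|) (𝓝[Ici 0 \ {t}] t) (𝓝 (n t))) ↔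
    ∀ᵐ t ∂(volume.restrict (Ioi (0:ℝ))),
      Tendsto (fun s => dist (v s) (v t) / |s - t|) (𝓝[≠] t) (𝓝 (n t)) := by
  rw [Measure.restrict_congr_set Ioi_ae_eq_Ici.symm]
  constructor
  · intro h
    filter_upwards [h, ae_restrict_mem measurableSet_Ioi] with t h1 h2
    rwa [punctured h2] at h1
  · intro h
    filter_upwards [h, ae_restrict_mem measurableSet_Ioi] with t h1 h2
    rwa [punctured h2]

/-- A curve whose speed is a reduction `c · m`, `0 ≤ c ≤ 1`, of an admissible one is admissible. -/
lemma adm_scale {ε : ℝ} {ubar : X} (hadm : Admissible ε ubar u m) {c : ℝ → ℝ} (hc : Measurable c)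
    (hc0 : ∀ t, 0 ≤ c t) (hc1 : ∀ t, c t ≤ 1) {v : ℝ → X} (hv0 : v 0 = ubar)
    (hd : ∀ s t, 0 ≤ s → s ≤ t → dist (v s) (v t) ≤ ∫ r in s..t, c r * m r)
    (hl : ∀ᵐ t ∂(volume.restrict (Ioi (0:ℝ))),
      Tendsto (fun s => dist (v s) (v t) / |s - t|) (𝓝[≠] t) (𝓝 (c t * m t))) :
    Admissible ε ubar v (fun t => c t * m t) := by
  have hm := hadm.2.1.1
  have hsq : ∀ t, (c t * m t) ^ 2 ≤ m t ^ 2 := fun t =>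
    pow_le_pow_left₀ (mul_nonneg (hc0 t) (hm.nonneg t))
      (mul_le_of_le_one_left (hm.nonneg t) (hc1 t)) 2
  refine ⟨hv0, ⟨⟨fun t => mul_nonneg (hc0 t) (hm.nonneg t), ?_, ?_, lim_iff.2 hl⟩, ?_⟩, ?_⟩
  · intro s hs t ht
    refine (hm.locInt s hs t ht).mono' (hc.aestronglyMeasurable.mul
      (hm.locInt s hs t ht).aestronglyMeasurable) (Eventually.of_forall fun r => ?_)
    rw [Real.norm_eq_abs, abs_of_nonneg (mul_nonneg (hc0 r) (hm.nonneg r))]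
    exact mul_le_of_le_one_left (hm.nonneg r) (hc1 r)
  · intro s hs t ht hst
    rw [integral_Icc_eq_integral_Ioc, ← intervalIntegral.integral_of_le hst]
    exact hd s t hs hst
  · intro s hs t ht
    refine (hadm.2.1.2 s hs t ht).mono' ((hc.aestronglyMeasurable.mul
      (hm.locInt s hs t ht).aestronglyMeasurable).pow 2) (Eventually.of_forall fun r => ?_)
    rw [Real.norm_eq_abs, abs_of_nonneg (sq_nonneg _)]
    exact hsq r
  · refine (lintegral_mono fun t => ENNReal.ofReal_le_ofReal (hsq t)).trans_lt hadm.2.2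

/-- Bounds of distances by integrals of a speed can be concatenated. -/
lemma glue {v : ℝ → X} {n : ℝ → ℝ} {l c : ℝ}
    (hn : ∀ s t, l ≤ s → s ≤ t → IntervalIntegrable n volume s t)
    (h1 : ∀ s t, l ≤ s → s ≤ t → t ≤ c → dist (v s) (v t) ≤ ∫ r in s..t, n r)
    (h2 : ∀ s t, l ≤ s → c ≤ s → s ≤ t → dist (v s) (v t) ≤ ∫ r in s..t, n r) :
    ∀ s t, l ≤ s → s ≤ t → dist (v s) (v t) ≤ ∫ r in s..t, n r := by
  intro s t hs hst
  rcases le_total t c with h | h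
  · exact h1 s t hs hst h
  rcases le_total c s with h' | h'
  · exact h2 s t hs h' hst
  rw [← intervalIntegral.integral_add_adjacent_intervals (hn s c hs h') (hn c t (hs.trans h') h)]
  exact (dist_triangle _ (v c) _).trans
    (add_le_add (h1 s c hs h' le_rfl) (h2 c t (hs.trans h') le_rfl h))

lemma lim_congr {v w : ℝ → X} {t l : ℝ} (h : v =ᶠ[𝓝 t] w)
    (hw : Tendsto (fun s => dist (w s) (w t) / |s - t|) (𝓝[≠] t) (𝓝 l)) :
    Tendsto (fun s => dist (v s) (v t) / |s - t|) (𝓝[≠] t) (𝓝 l) := by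
  refine hw.congr' ?_
  filter_upwards [h.filter_mono nhdsWithin_le_nhds] with s hs
  rw [hs, h.eq_of_nhds]

lemma scaled_ii (hm : IsMetricDerivOn u m (Ici 0)) {c : ℝ → ℝ} (hc : Measurable c)
    (hc0 : ∀ t, 0 ≤ c t) (hc1 : ∀ t, c t ≤ 1) :
    ∀ s t, (0:ℝ) ≤ s → s ≤ t → IntervalIntegrable (fun r => c r * m r) volume s t := by
  intro s t hs hst
  refine (hm.ii hs (hs.trans hst)).mono_fun' (hc.aestronglyMeasurable.mul
      (hm.ii hs (hs.trans hst)).aestronglyMeasurable_restrict_uIoc) (Eventually.of_forall fun r => ?_)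
  simp only [Real.norm_eq_abs]
  rw [abs_of_nonneg (mul_nonneg (hc0 r) (hm.nonneg r))]
  exact mul_le_of_le_one_left (hm.nonneg r) (hc1 r)

/-- Replacing a piece of an admissible curve by a geodesic run with proportional arc length. -/
lemma shortcut {ε : ℝ} {ubar : X} (hadm : Admissible ε ubar u m) {a b : ℝ} (ha : 0 ≤ a)
    (hab : a ≤ b) (hx : arc m a < arc m b) {γ : ℝ → X} (hγ0 : γ 0 = u a) (hγ1 : γ 1 = u b)
    (hγ : ∀ s ∈ Icc (0:ℝ) 1, ∀ t ∈ Icc (0:ℝ) 1, dist (γ s) (γ t) = |t - s| * dist (u a) (u b)) :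
    ∃ n : ℝ → ℝ, (∀ t, 0 ≤ n t ∧ n t ≤ m t) ∧ (∀ t, t ∉ Ioo a b → n t = m t) ∧
      ∃ v : ℝ → X, (∀ t, t ∉ Ioo a b → v t = u t) ∧
      (∀ t ∈ Icc a b, v t = γ ((arc m t - arc m a) / (arc m b - arc m a))) ∧
      Admissible ε ubar v n := by
  classical
  have hm := hadm.2.1.1
  set L := arc m b - arc m a with hL
  have hLpos : 0 < L := by linarith
  set d := dist (u a) (u b)
  have hd0 : 0 ≤ d := dist_nonneg
  have hdL : d / L ≤ 1 := (div_le_one hLpos).2 (hm.dist_arc ha hab)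
  set c : ℝ → ℝ := (Ioo a b).piecewise (fun _ => d / L) (fun _ => 1) with hcdef
  have hcm : Measurable c := Measurable.piecewise measurableSet_Ioo measurable_const measurable_const
  have hcin : ∀ t ∈ Ioo a b, c t = d / L := fun t ht => piecewise_eq_of_mem _ _ _ ht
  have hcout : ∀ t, t ∉ Ioo a b → c t = 1 := fun t ht => piecewise_eq_of_notMem _ _ _ ht
  have hc0 : ∀ t, 0 ≤ c t := fun t => by
    by_cases ht : t ∈ Ioo a b
    · rw [hcin t ht]; positivity
    · rw [hcout t ht]; norm_num
  have hc1 : ∀ t, c t ≤ 1 := fun t => by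
    by_cases ht : t ∈ Ioo a b
    · rw [hcin t ht]; exact hdL
    · rw [hcout t ht]
  set θ : ℝ → ℝ := fun t => (arc m t - arc m a) / L with hθ
  have hθm : ∀ t ∈ Icc a b, θ t ∈ Icc (0:ℝ) 1 := fun t ht => by
    have h1 := hm.arc_mono ha ht.1
    have h2 := hm.arc_mono (ha.trans ht.1) ht.2
    exact ⟨div_nonneg (by linarith) hLpos.le, (div_le_one hLpos).2 (by linarith)⟩
  set v : ℝ → X := (Ioo a b).piecewise (fun t => γ (θ t)) u with hvdef
  have hvout : ∀ t, t ∉ Ioo a b → v t = u t := fun t ht => piecewise_eq_of_notMem _ _ _ ht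
  have hvin : ∀ t ∈ Icc a b, v t = γ (θ t) := fun t ht => by
    by_cases h : t ∈ Ioo a b
    · exact piecewise_eq_of_mem _ _ _ h
    · rw [hvout t h]
      rcases eq_or_lt_of_le ht.1 with e | e
      · subst e; simp [hθ, hγ0]
      · have : t = b := le_antisymm ht.2 (not_lt.1 fun h' => h ⟨e, h'⟩)
        subst this
        simp only [hθ]; rw [div_self hLpos.ne', hγ1]
  have hint := scaled_ii hm hcm hc0 hc1
  have hvd : ∀ s ∈ Icc a b, ∀ t ∈ Icc a b, dist (v s) (v t) = d / L * |arc m s - arc m t| := by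
    intro s hs t ht
    rw [hvin s hs, hvin t ht, hγ _ (hθm s hs) _ (hθm t ht)]
    have : θ t - θ s = (arc m t - arc m s) / L := by simp only [hθ]; ring
    rw [this, abs_div, abs_of_pos hLpos, abs_sub_comm]; ring
  have hout : ∀ s t, 0 ≤ s → s ≤ t → (t ≤ a ∨ b ≤ s) →
      dist (v s) (v t) ≤ ∫ r in s..t, c r * m r := by
    intro s t hs hst hor
    have e : ∀ r ∈ Icc s t, r ∉ Ioo a b := by
      rintro r ⟨h1, h2⟩ ⟨h3, h4⟩
      rcases hor with h | h <;> linarith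
    rw [hvout s (e s ⟨le_rfl, hst⟩), hvout t (e t ⟨hst, le_rfl⟩)]
    refine (hm.dist_arc hs hst).trans (le_of_eq ?_)
    rw [hm.arc_sub hs (hs.trans hst)]
    refine intervalIntegral.integral_congr fun r hr => ?_
    rw [uIcc_of_le hst] at hr
    simp [hcout r (e r hr)]
  have hmid : ∀ s t, a ≤ s → s ≤ t → t ≤ b → dist (v s) (v t) ≤ ∫ r in s..t, c r * m r := by
    intro s t hs hst ht
    rw [hvd s ⟨hs, hst.trans ht⟩ t ⟨hs.trans hst, ht⟩, abs_sub_comm,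
      abs_of_nonneg (sub_nonneg.2 (hm.arc_mono (ha.trans hs) hst)),
      hm.arc_sub (ha.trans hs) ((ha.trans hs).trans hst), ← intervalIntegral.integral_const_mul]
    rw [intervalIntegral.integral_of_le hst, intervalIntegral.integral_of_le hst,
      integral_Ioc_eq_integral_Ioo, integral_Ioc_eq_integral_Ioo]
    refine le_of_eq (setIntegral_congr_fun measurableSet_Ioo fun r hr => ?_)
    rw [hcin r ⟨hs.trans_lt hr.1, hr.2.trans_le ht⟩]
  have hdist : ∀ s t, 0 ≤ s → s ≤ t → dist (v s) (v t) ≤ ∫ r in s..t, c r * m r := by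
    refine glue (c := a) hint (fun s t hs hst hta => hout s t hs hst (Or.inl hta)) ?_
    intro s t hs has hst
    exact glue (l := a) (c := b) (fun s t hs hst => hint s t (ha.trans hs) hst)
      (fun s t hs hst htb => hmid s t hs hst htb)
      (fun s t hs hbs hst => hout s t (ha.trans hs) hst (Or.inr hbs)) s t has hst
  have hlim : ∀ᵐ t ∂(volume.restrict (Ioi (0:ℝ))),
      Tendsto (fun s => dist (v s) (v t) / |s - t|) (𝓝[≠] t) (𝓝 (c t * m t)) := by
    have n1 : ∀ᵐ t ∂(volume.restrict (Ioi (0:ℝ))), t ≠ a :=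
      ae_restrict_of_ae (Measure.ae_ne volume a)
    have n2 : ∀ᵐ t ∂(volume.restrict (Ioi (0:ℝ))), t ≠ b :=
      ae_restrict_of_ae (Measure.ae_ne volume b)
    filter_upwards [lim_iff.1 hm.limit, hm.arc_ae_deriv, n1, n2] with t h1 h2 h3 h4
    by_cases ht : t ∈ Ioo a b
    · rw [hcin t ht]
      have hs := (hasDerivAt_iff_tendsto_slope.1 h2).abs.const_mul (d / L)
      rw [abs_of_nonneg (hm.nonneg t)] at hs
      refine hs.congr' ?_
      have : ∀ᶠ s in 𝓝[≠] t, s ∈ Ioo a b :=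
        mem_nhdsWithin_of_mem_nhds (Ioo_mem_nhds ht.1 ht.2)
      filter_upwards [this] with s hs'
      rw [hvd s ⟨hs'.1.le, hs'.2.le⟩ t ⟨ht.1.le, ht.2.le⟩, slope_def_field, abs_div, mul_div_assoc]
    · rw [hcout t ht, one_mul]
      refine lim_congr ?_ h1
      have : t ∈ (Icc a b)ᶜ := fun h => ht ⟨lt_of_le_of_ne h.1 (Ne.symm h3), lt_of_le_of_ne h.2 h4⟩
      filter_upwards [isClosed_Icc.isOpen_compl.mem_nhds this] with s hs
      exact hvout s fun h => hs ⟨h.1.le, h.2.le⟩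
  have hv0 : v 0 = ubar := by
    rw [hvout 0 fun h => absurd h.1 (not_lt.2 ha), hadm.1]
  exact ⟨fun t => c t * m t, fun t => ⟨mul_nonneg (hc0 t) (hm.nonneg t),
    mul_le_of_le_one_left (hm.nonneg t) (hc1 t)⟩, fun t ht => by simp [hcout t ht], v, hvout,
    hvin, adm_scale hadm hcm hc0 hc1 hv0 hdist hlim⟩

lemma arc_int (H : Setting φ ε ubar u m) : Integrable (arc m) (expMeasure ε) := by
  have := finite_exp H.hε
  have h1 := hardy H.hε H.adm.2.1 H.adm.sq_int
  refine ((integrable_const (1:ℝ)).add h1).mono' ?_ (Eventually.of_forall fun t => ?_)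
  · refine AEStronglyMeasurable.mono_ac (exp_abs ε) ?_
    exact (H.md.arc_contOn.mono Ioi_subset_Ici_self).aestronglyMeasurable measurableSet_Ioi
  · simp only [Real.norm_eq_abs, Pi.add_apply]
    nlinarith [sq_nonneg (|arc m t| - 1), sq_abs (arc m t), abs_nonneg (arc m t)]

lemma closed_le (H : Setting φ ε ubar u m) (α β : ℝ) :
    IsClosed {t : ℝ | φ (u (max t 0)) ≤ ((α + β * arc m (max t 0) : ℝ) : EReal)} := by
  have hc : Continuous (fun t : ℝ => α + β * arc m (max t 0)) := by
    have : Continuous (fun t : ℝ => arc m (max t 0)) :=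
      H.md.arc_contOn.comp_continuous (by fun_prop) (fun t => mem_Ici.2 (le_max_right _ _))
    fun_prop
  rw [← isOpen_compl_iff, isOpen_iff_mem_nhds]
  intro t ht
  simp only [mem_compl_iff, mem_ofPred_eq, not_le] at ht
  obtain ⟨q, hq1, hq2⟩ := EReal.lt_iff_exists_real_btwn.1 ht
  filter_upwards [H.lscU t q hq2, hc.continuousAt.eventually
    (gt_mem_nhds (EReal.coe_lt_coe_iff.1 hq1))] with s h1 h2
  simp only [mem_compl_iff, mem_ofPred_eq, not_le]
  exact (EReal.coe_lt_coe_iff.2 h2).trans h1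

/-- Maximum principle: along the minimizer `φ` is dominated by affine functions of arc length as
soon as it is at the two ends of an interval. On a maximal interval where this fails, a geodesic
shortcut would strictly decrease the functional. -/
lemma max_principle (H : Setting φ ε ubar u m) {a b α β : ℝ} (ha : 0 ≤ a)
    (h1 : φ (u a) ≤ ((α + β * arc m a : ℝ) : EReal))
    (h2 : φ (u b) ≤ ((α + β * arc m b : ℝ) : EReal)) {t : ℝ} (ht : t ∈ Icc a b) :
    φ (u t) ≤ ((α + β * arc m t : ℝ) : EReal) := by
  by_contra hcon
  have hm := H.md
  set C := {t : ℝ | φ (u (max t 0)) ≤ ((α + β * arc m (max t 0) : ℝ) : EReal)} with hC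
  have hmem : ∀ s, 0 ≤ s → (s ∈ C ↔ φ (u s) ≤ ((α + β * arc m s : ℝ) : EReal)) := fun s hs => by
    simp only [hC, mem_ofPred_eq, max_eq_left hs]
  have hCc : IsClosed C := H.closed_le α β
  have ht0 : 0 ≤ t := ha.trans ht.1
  have ka : IsCompact (C ∩ Icc a t) := isCompact_Icc.inter_left hCc
  have kb : IsCompact (C ∩ Icc t b) := isCompact_Icc.inter_left hCc
  obtain ⟨ha'C, ha'⟩ := ka.sSup_mem ⟨a, (hmem a ha).2 h1, le_rfl, ht.1⟩
  obtain ⟨hb'C, hb'⟩ := kb.sInf_mem ⟨b, (hmem b (ht0.trans ht.2)).2 h2, ht.2, le_rfl⟩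
  set a' := sSup (C ∩ Icc a t) with ha'def
  set b' := sInf (C ∩ Icc t b) with hb'def
  have ha'0 : 0 ≤ a' := ha.trans ha'.1
  have htC : t ∉ C := fun h => hcon ((hmem t ht0).1 h)
  have hat : a' < t := lt_of_le_of_ne ha'.2 fun e => htC (e ▸ ha'C)
  have htb : t < b' := lt_of_le_of_ne hb'.1 fun e => htC (e ▸ hb'C)
  have hgt : ∀ s ∈ Ioo a' b', ((α + β * arc m s : ℝ) : EReal) < φ (u s) := by
    intro s hs
    rw [← not_le]
    intro hle
    have hsC : s ∈ C := (hmem s (ha'0.trans hs.1.le)).2 hle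
    rcases le_total s t with h | h
    · exact absurd (le_csSup ka.bddAbove ⟨hsC, ha'.1.trans hs.1.le, h⟩) (not_le.2 hs.1)
    · exact absurd (csInf_le kb.bddBelow ⟨hsC, h, hs.2.le.trans hb'.2⟩) (not_le.2 hs.2)
  have ka' := (hmem a' ha'0).1 ha'C
  have kb' := (hmem b' (ht0.trans htb.le)).1 hb'C
  rcases (hm.arc_mono ha'0 (hat.trans htb).le).eq_or_lt with e | hlt
  · have e1 := hm.arc_mono ha'0 hat.le
    have e2 := hm.arc_mono ht0 htb.le
    have e3 : arc m t = arc m a' := by linarith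
    have e4 : u a' = u t := dist_le_zero.1 ((hm.dist_arc ha'0 hat.le).trans (by linarith))
    apply hcon
    rw [← e4, e3]; exact ka'
  · have fa : φ (u a') ≠ ⊤ := ne_top_of_le_ne_top (EReal.coe_ne_top _) ka'
    have fb : φ (u b') ≠ ⊤ := ne_top_of_le_ne_top (EReal.coe_ne_top _) kb'
    obtain ⟨γ, hγ0, hγ1, hγd, hγφ⟩ := H.conv _ _ fa fb
    obtain ⟨n, hn, hnout, v, hvout, hvin, hadm⟩ :=
      shortcut H.adm ha'0 (hat.trans htb).le hlt hγ0 hγ1 hγd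
    have hI : IntegrableOn (fun s => ε / 2 * m s ^ 2 + (α + β * arc m s)) (Ioo a' b')
        (expMeasure ε) := by
      have := finite_exp H.hε
      exact ((H.adm.sq_int.const_mul _).add
        ((integrable_const α).add (H.arc_int.const_mul β))).integrableOn
    have hL : 0 < arc m b' - arc m a' := by linarith
    have hcmp := H.compare hadm measurableSet_Ioo (fun s _ hs => ⟨hvout s hs, hnout s hs⟩) hI
      (Eventually.of_forall fun s hs => by
        have hs' := Ioo_subset_Icc_self hs
        set θ := (arc m s - arc m a') / (arc m b' - arc m a') with hθ
        have g1 := hm.arc_mono ha'0 hs'.1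
        have g2 := hm.arc_mono (ha'0.trans hs'.1) hs'.2
        have hθm : θ ∈ Icc (0:ℝ) 1 :=
          ⟨div_nonneg (by linarith) hL.le, (div_le_one hL).2 (by linarith)⟩
        rw [wedIntegrand, EReal.coe_add, hvin s hs']
        have hφ := hγφ θ hθm
        obtain ⟨A, hA⟩ : ∃ A : ℝ, φ (u a') = A :=
          ⟨_, (EReal.coe_toReal fa (H.ne_bot _)).symm⟩
        obtain ⟨B, hB⟩ : ∃ B : ℝ, φ (u b') = B :=
          ⟨_, (EReal.coe_toReal fb (H.ne_bot _)).symm⟩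
        rw [hA, hB] at hφ
        rw [hA] at ka'
        rw [hB] at kb'
        rw [EReal.coe_le_coe_iff] at ka' kb'
        refine add_le_add (EReal.coe_le_coe_iff.2 ?_) (hφ.trans ?_)
        · have := pow_le_pow_left₀ (hn s).1 (hn s).2 2
          have := H.hε
          gcongr
        · norm_cast
          have e : arc m s = (1 - θ) * arc m a' + θ * arc m b' := by
            rw [hθ]; field_simp; ring
          have k1 := mul_le_mul_of_nonneg_left ka' (sub_nonneg.2 hθm.2)
          have k2 := mul_le_mul_of_nonneg_left kb' hθm.1
          rw [e]
          linarith)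
    have hg : IntegrableOn (fun s => (φ (u s)).toReal - (α + β * arc m s)) (Ioo a' b')
        (expMeasure ε) := by
      have := H.F_int.integrableOn.sub hI
      refine this.congr (Eventually.of_forall fun s => ?_)
      simp [F]
    have hle0 : ∫ s in Ioo a' b', ((φ (u s)).toReal - (α + β * arc m s)) ∂(expMeasure ε) ≤ 0 := by
      have e := integral_sub H.F_int.integrableOn hI
      have e' : ∫ s in Ioo a' b', ((φ (u s)).toReal - (α + β * arc m s)) ∂(expMeasure ε) =
          ∫ s in Ioo a' b', (F φ ε u m s - (ε / 2 * m s ^ 2 + (α + β * arc m s)))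
            ∂(expMeasure ε) := by
        congr 1; funext s; simp [F]
      rw [e', e]; linarith
    have hpos : ∀ᵐ s ∂((expMeasure ε).restrict (Ioo a' b')),
        0 < (φ (u s)).toReal - (α + β * arc m s) := by
      filter_upwards [ae_restrict_of_ae H.wed_int.1, ae_restrict_mem measurableSet_Ioo] with s k1 k2
      have := hgt s k2
      rw [← EReal.coe_toReal k1 (H.ne_bot _), EReal.coe_lt_coe_iff] at this
      linarith
    have hz := (integral_eq_zero_iff_of_nonneg_ae (hpos.mono fun s hs => hs.le) hg).1
      (le_antisymm hle0 (integral_nonneg_of_ae (hpos.mono fun s hs => hs.le)))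
    have hF : ∀ᵐ s ∂((expMeasure ε).restrict (Ioo a' b')), False := by
      filter_upwards [hpos, hz] with s k1 k2
      rw [k2] at k1; exact lt_irrefl _ k1
    rw [ae_iff] at hF
    simp only [not_false_eq_true, ofPred_true, Measure.restrict_apply_univ] at hF
    exact exp_pos_Ioo H.hε ha'0 (hat.trans htb) hF

end Setting

end WED

namespace WED

/-! ### The energy along the minimizer is finite and nonincreasing -/

/-- The energy `φ(u t)` as a real number. -/
def en {X : Type*} (φ : X → EReal) (u : ℝ → X) (t : ℝ) : ℝ := (φ (u t)).toReal

namespace Setting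

variable {X : Type*} [MetricSpace X] {φ : X → EReal} {ε : ℝ} {ubar : X} {u : ℝ → X} {m : ℝ → ℝ}

lemma exists_fin (H : Setting φ ε ubar u m) {p : ℝ → Prop} (hp : ∀ᵐ t ∂(expMeasure ε), p t)
    {a b : ℝ} (ha : 0 ≤ a) (hab : a < b) : ∃ t ∈ Ioo a b, p t := by
  by_contra! hcon
  refine exp_pos_Ioo H.hε ha hab (measure_mono_null (fun t ht => ?_) (ae_iff.1 hp))
  exact hcon t ht

lemma fin (H : Setting φ ε ubar u m) {t : ℝ} (ht : 0 ≤ t) : φ (u t) ≠ ⊤ := by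
  obtain ⟨b, hb, hfb⟩ := H.exists_fin H.wed_int.1 ht (lt_add_one t)
  have h0 : φ (u 0) ≠ ⊤ := by rw [H.adm.1]; exact H.fin0
  have k := H.max_principle (a := 0) (b := b) (α := max (φ (u 0)).toReal (φ (u b)).toReal) (β := 0)
    le_rfl ?_ ?_ ⟨ht, hb.1.le⟩
  · exact ne_top_of_le_ne_top (EReal.coe_ne_top _) k
  · rw [← EReal.coe_toReal h0 (H.ne_bot _), EReal.coe_le_coe_iff]; simp
  · rw [← EReal.coe_toReal hfb (H.ne_bot _), EReal.coe_le_coe_iff]; simp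

lemma phi_eq (H : Setting φ ε ubar u m) {t : ℝ} (ht : 0 ≤ t) : φ (u t) = (en φ u t : EReal) :=
  (EReal.coe_toReal (H.fin ht) (H.ne_bot _)).symm

/-- The energy is a convex function of arc length. -/
lemma arc_convex (H : Setting φ ε ubar u m) {a t b : ℝ} (ha : 0 ≤ a) (hat : a ≤ t) (htb : t ≤ b) :
    (arc m b - arc m a) * en φ u t ≤
      (arc m b - arc m t) * en φ u a + (arc m t - arc m a) * en φ u b := by
  have h1 := H.md.arc_mono ha hat
  have h2 := H.md.arc_mono (ha.trans hat) htb
  rcases (h1.trans h2).eq_or_lt with e | hlt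
  · have e1 : arc m t = arc m a := by linarith
    rw [e1, ← e]; simp
  have hL : 0 < arc m b - arc m a := by linarith
  set β := (en φ u b - en φ u a) / (arc m b - arc m a) with hβ
  have hβ' : β * (arc m b - arc m a) = en φ u b - en φ u a := div_mul_cancel₀ _ hL.ne'
  have k := H.max_principle (a := a) (b := b) (α := en φ u a - β * arc m a) (β := β) ha
    (by rw [H.phi_eq ha, EReal.coe_le_coe_iff]; linarith)
    (by rw [H.phi_eq (ha.trans (hat.trans htb)), EReal.coe_le_coe_iff]; linarith) ⟨hat, htb⟩
  rw [H.phi_eq (ha.trans hat), EReal.coe_le_coe_iff] at k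
  have k' := mul_le_mul_of_nonneg_left k hL.le
  refine k'.trans (le_of_eq ?_)
  linear_combination (arc m t - arc m a) * hβ'

lemma en_max (H : Setting φ ε ubar u m) {a t b : ℝ} (ha : 0 ≤ a) (hat : a ≤ t) (htb : t ≤ b) :
    en φ u t ≤ max (en φ u a) (en φ u b) := by
  have k := H.max_principle (a := a) (b := b) (α := max (en φ u a) (en φ u b)) (β := 0) ha
    (by rw [H.phi_eq ha, EReal.coe_le_coe_iff]; simp)
    (by rw [H.phi_eq (ha.trans (hat.trans htb)), EReal.coe_le_coe_iff]; simp) ⟨hat, htb⟩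
  rw [H.phi_eq (ha.trans hat), EReal.coe_le_coe_iff] at k
  linarith

lemma en_const (H : Setting φ ε ubar u m) {a b : ℝ} (ha : 0 ≤ a) (hab : a ≤ b)
    (h : arc m a = arc m b) : en φ u a = en φ u b := by
  have : u a = u b := dist_le_zero.1 ((H.md.dist_arc ha hab).trans (by linarith))
  rw [en, en, this]

/-- Stopping an admissible curve at time `a`. -/
lemma frozen_tail_adm {ε : ℝ} {ubar : X} (hadm : Admissible ε ubar u m) {a : ℝ} (ha : 0 ≤ a) :
    Admissible ε ubar (fun t => u (min t a)) (fun t => (Iic a).indicator (fun _ => 1) t * m t) := by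
  have hm := hadm.2.1.1
  set c : ℝ → ℝ := (Iic a).indicator (fun _ => 1) with hc
  have hcm : Measurable c := measurable_const.indicator measurableSet_Iic
  have hcin : ∀ t, t ≤ a → c t = 1 := fun t ht => indicator_of_mem (mem_Iic.2 ht) _
  have hcout : ∀ t, a < t → c t = 0 := fun t ht => indicator_of_notMem (by simpa using ht) _
  have hc0 : ∀ t, 0 ≤ c t := fun t => indicator_nonneg (fun _ _ => zero_le_one) t
  have hc1 : ∀ t, c t ≤ 1 := fun t => by
    rcases le_or_gt t a with h | h
    · rw [hcin t h]
    · rw [hcout t h]; norm_num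
  refine adm_scale hadm hcm hc0 hc1 (by rw [min_eq_left ha, hadm.1]) ?_ ?_
  · refine glue (c := a) (scaled_ii hm hcm hc0 hc1) ?_ ?_
    · intro s t hs hst hta
      simp only [min_eq_left hta, min_eq_left (hst.trans hta)]
      refine (hm.dist_arc hs hst).trans (le_of_eq ?_)
      rw [hm.arc_sub hs (hs.trans hst)]
      refine intervalIntegral.integral_congr fun r hr => ?_
      rw [uIcc_of_le hst] at hr
      simp [hcin r (hr.2.trans hta)]
    · intro s t hs has hst
      simp only [min_eq_right has, min_eq_right (has.trans hst), dist_self]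
      exact intervalIntegral.integral_nonneg hst fun r _ => mul_nonneg (hc0 r) (hm.nonneg r)
  · have n1 : ∀ᵐ t ∂(volume.restrict (Ioi (0:ℝ))), t ≠ a :=
      ae_restrict_of_ae (Measure.ae_ne volume a)
    filter_upwards [lim_iff.1 hm.limit, n1] with t h1 h2
    rcases lt_or_gt_of_ne h2 with h | h
    · rw [hcin t h.le, one_mul]
      refine lim_congr (v := fun t => u (min t a)) ?_ h1
      filter_upwards [Iio_mem_nhds h] with s hs
      rw [min_eq_left (le_of_lt hs)]
    · rw [hcout t h, zero_mul]
      refine lim_congr (v := fun t => u (min t a)) (w := fun _ => u a) ?_ (by simp)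
      filter_upwards [Ioi_mem_nhds h] with s hs
      rw [min_eq_right (le_of_lt hs)]

lemma en_antitone (H : Setting φ ε ubar u m) : AntitoneOn (en φ u) (Ici 0) := by
  intro t₁ ht₁ t₂ ht₂ h12
  by_contra! hlt
  have ht₁' : (0:ℝ) ≤ t₁ := ht₁
  have ht₂' : (0:ℝ) ≤ t₂ := ht₂
  obtain ⟨a, haI, hamin⟩ := LowerSemicontinuousOn.exists_isMinOn (s := Icc 0 t₂)
    ⟨0, le_rfl, ht₂'⟩ isCompact_Icc (H.lscU.lowerSemicontinuousOn _)
  have ha : 0 ≤ a := haI.1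
  have hamin' : ∀ s ∈ Icc 0 t₂, en φ u a ≤ en φ u s := by
    intro s hs
    have := hamin hs
    simp only [mem_ofPred_eq, max_eq_left ha, max_eq_left hs.1] at this
    rwa [H.phi_eq ha, H.phi_eq hs.1, EReal.coe_le_coe_iff] at this
  have ha1 : en φ u a < en φ u t₂ := (hamin' t₁ ⟨ht₁, h12⟩).trans_lt hlt
  have htail : ∀ s, t₂ ≤ s → en φ u t₂ ≤ en φ u s := by
    intro s hs
    have := H.en_max ha haI.2 hs
    rcases le_max_iff.1 this with h | h
    · exact absurd h (not_le.2 ha1)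
    · exact h
  have hge : ∀ s, a ≤ s → en φ u a ≤ en φ u s := by
    intro s hs
    rcases le_total s t₂ with h | h
    · exact hamin' s ⟨ha.trans hs, h⟩
    · exact ha1.le.trans (htail s h)
  have := finite_exp H.hε
  have hcI : IntegrableOn (fun _ : ℝ => en φ u a) (Ioi a) (expMeasure ε) :=
    (integrable_const _).integrableOn
  have hcmp := H.compare (frozen_tail_adm H.adm ha) (S := Ioi a) measurableSet_Ioi (by
      intro t ht hta
      have : t ≤ a := by simpa using hta
      simp [this]) hcI (Eventually.of_forall fun t ht => by
      have hta : a < t := ht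
      simp [wedIntegrand, min_eq_right hta.le, hta, H.phi_eq ha])
  have hI := H.F_int.integrableOn.sub hcI
  have hnn : ∀ t ∈ Ioi a, 0 ≤ F φ ε u m t - en φ u a := by
    intro t ht
    have h1 := hge t (le_of_lt ht)
    have h2 : 0 ≤ ε / 2 * m t ^ 2 := by have := H.hε; positivity
    simp only [F, en] at *
    linarith
  have hz := (setIntegral_eq_zero_iff_of_nonneg_ae
    ((ae_restrict_iff' measurableSet_Ioi).2 (Eventually.of_forall hnn)) hI).1
    (le_antisymm (by
      rw [integral_sub H.F_int.integrableOn hcI]; linarith)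
      (setIntegral_nonneg measurableSet_Ioi hnn))
  rw [Filter.EventuallyEq, ae_restrict_iff' measurableSet_Ioi] at hz
  obtain ⟨s, hs, hs'⟩ := H.exists_fin hz ht₂' (lt_add_one t₂)
  have h0 := hs' (haI.2.trans_lt hs.1)
  have h1 := htail s hs.1.le
  have h2 : 0 ≤ ε / 2 * m s ^ 2 := by have := H.hε; positivity
  simp only [F, en, Pi.zero_apply] at *
  linarith

end Setting

end WED

namespace WED

/-! ### Inner variations and the first integral -/

namespace Setting

variable {X : Type*} [MetricSpace X] {φ : X → EReal} {ε : ℝ} {ubar : X} {u : ℝ → X} {m : ℝ → ℝ}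

/-- Minimality tested with the reparametrized curve `u ∘ τ`, where `τ = r⁻¹`, after the change of
variables `t ↦ r t`. -/
lemma reparam (H : Setting φ ε ubar u m) {r τ r' : ℝ → ℝ} (hr : ∀ x, HasDerivAt r (r' x) x)
    (hr'c : Continuous r') (hpos : ∀ x, 1 / 2 ≤ r' x) (hr0 : r 0 = 0) (h1 : ∀ x, τ (r x) = x)
    (h2 : ∀ y, r (τ y) = y) {K₁ K₂ : ℝ} (hK₁ : ∀ t, wt ε (r t) ≤ K₁ * wt ε t)
    (hK₂ : ∀ t, r' t ≤ K₂) :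
    ∫ t, F φ ε u m t ∂(expMeasure ε) ≤
      ∫ t in Ioi 0, wt ε (r t) * (ε / 2 * m t ^ 2 * (r' t)⁻¹ + en φ u t * r' t) := by
  have hm := H.md
  have hε := H.hε
  have hp : ∀ x, 0 < r' x := fun x => by linarith [hpos x]
  have hrm : StrictMono r := strictMono_of_deriv_pos fun x => by rw [(hr x).deriv]; exact hp x
  have hτm : StrictMono τ := fun a b hab => by
    by_contra! hcon
    have := hrm.monotone hcon
    rw [h2, h2] at this; linarith
  have hτc : Continuous τ := hτm.monotone.continuous_of_surjective fun x => ⟨r x, h1 x⟩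
  have hτ0 : τ 0 = 0 := by rw [← hr0, h1, hr0]
  have hτp : ∀ y, 0 < y → 0 < τ y := fun y hy => hτ0 ▸ hτm hy
  have hτn : ∀ y, 0 ≤ y → 0 ≤ τ y := fun y hy => hτ0 ▸ hτm.monotone hy
  have hrp : ∀ y, 0 < y → 0 < r y := fun y hy => hr0 ▸ hrm hy
  have hrcont : Continuous r := continuous_iff_continuousAt.2 fun x => (hr x).continuousAt
  have hτd : ∀ y, HasDerivAt τ (r' (τ y))⁻¹ y := fun y =>
    HasDerivAt.of_local_left_inverse hτc.continuousAt (hr (τ y)) (hp _).ne'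
      (Eventually.of_forall h2)
  have imIcc : ∀ s t, r '' (Icc (τ s) (τ t)) = Icc s t := fun s t => by
    ext y; constructor
    · rintro ⟨x, ⟨hx1, hx2⟩, rfl⟩
      exact ⟨by simpa [h2] using hrm.monotone hx1, by simpa [h2] using hrm.monotone hx2⟩
    · rintro ⟨hy1, hy2⟩
      exact ⟨τ y, ⟨hτm.monotone hy1, hτm.monotone hy2⟩, h2 y⟩
  have imIoi : r '' (Ioi 0) = Ioi 0 := by
    ext y; constructor
    · rintro ⟨x, hx, rfl⟩; exact hrp x hx
    · intro hy; exact ⟨τ y, hτp y hy, h2 y⟩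
  have hrw : ∀ s : Set ℝ, ∀ x ∈ s, HasDerivWithinAt r (r' x) s x := fun s x _ =>
    (hr x).hasDerivWithinAt
  have cv : ∀ (s : Set ℝ) (hs : MeasurableSet s) (g : ℝ → ℝ),
      ∫ x in r '' s, g x = ∫ x in s, r' x * g (r x) := fun s hs g => by
    rw [integral_image_eq_integral_abs_deriv_smul hs (hrw s) hrm.injective.injOn]
    simp [abs_of_pos (hp _)]
  have cvi : ∀ (s : Set ℝ) (hs : MeasurableSet s) (g : ℝ → ℝ),
      IntegrableOn g (r '' s) ↔ IntegrableOn (fun x => r' x * g (r x)) s := fun s hs g => by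
    rw [integrableOn_image_iff_integrableOn_abs_deriv_smul hs (hrw s) hrm.injective.injOn]
    simp [abs_of_pos (hp _)]
  set n : ℝ → ℝ := fun t => m (τ t) * (r' (τ t))⁻¹ with hn
  have hnr : ∀ x, n (r x) = m x * (r' x)⁻¹ := fun x => by simp [hn, h1]
  have e1 : ∀ x, r' x * n (r x) = m x := fun x => by
    rw [hnr]; field_simp [(hp x).ne']
  have e2 : ∀ x, r' x * n (r x) ^ 2 = m x ^ 2 * (r' x)⁻¹ := fun x => by
    rw [hnr]; field_simp [(hp x).ne']
  have hinvc : Continuous fun x => (r' x)⁻¹ := hr'c.inv₀ fun x => (hp x).ne'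
  have hinvle : ∀ x, (r' x)⁻¹ ≤ 2 := fun x => by
    have := inv_anti₀ (by norm_num) (hpos x)
    norm_num at this; exact this
  have hwtrc : Continuous fun x => wt ε (r x) := (continuous_wt ε).comp hrcont
  -- products of the weight at `r t` with bounded continuous factors
  have bdd : ∀ (g k : ℝ → ℝ) (K : ℝ), Integrable g (expMeasure ε) → Continuous k → (∀ x, 0 ≤ k x) →
      (∀ x, k x ≤ K) → IntegrableOn (fun x => wt ε (r x) * (g x * k x)) (Ioi 0) := by
    intro g k K hg hk hk0 hkK
    have hg' := (integrable_exp_iff hε).1 hg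
    have hwk : Continuous fun x => wt ε (r x) * k x / wt ε x :=
      (hwtrc.mul hk).div (continuous_wt ε) fun x => (wt_pos hε x).ne'
    have := hg'.bdd_mul (c := K₁ * K) hwk.aestronglyMeasurable (Eventually.of_forall fun x => ?_)
    · refine this.congr (Eventually.of_forall fun x => ?_)
      have := (wt_pos hε x).ne'
      simp only
      field_simp
    · have w1 := wt_pos hε x
      have w2 := wt_pos hε (r x)
      rw [Real.norm_eq_abs, abs_of_nonneg (div_nonneg (mul_nonneg w2.le (hk0 x)) w1.le),
        div_le_iff₀ w1]
      have := mul_le_mul (hK₁ x) (hkK x) (hk0 x) (w2.le.trans (hK₁ x))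
      linarith
  have i1 := bdd _ _ 2 H.adm.sq_int hinvc (fun x => inv_nonneg.2 (hp x).le) hinvle
  have i2 := bdd _ _ K₂ H.wed_int.2 hr'c (fun x => (hp x).le) hK₂
  have hsqmeas : Integrable (fun t => n t ^ 2) (expMeasure ε) := by
    rw [integrable_exp_iff hε, ← imIoi, cvi _ measurableSet_Ioi]
    refine i1.congr (Eventually.of_forall fun x => ?_)
    simp only
    rw [← e2]; ring
  have hadm : Admissible ε ubar (fun t => u (τ t)) n := by
    refine ⟨(congrArg u hτ0).trans H.adm.1, ⟨⟨fun t => mul_nonneg (hm.nonneg _) (inv_nonneg.2 (hp _).le),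
      ?_, ?_, ?_⟩, ?_⟩, hsqmeas.lintegral_lt_top⟩
    · intro s hs t ht
      rw [← imIcc, cvi _ measurableSet_Icc]
      simp only [e1]
      exact hm.locInt _ (hτn s hs) _ (hτn t ht)
    · intro s hs t ht hst
      rw [← imIcc, cv _ measurableSet_Icc]
      simp only [e1]
      exact hm.dist_le _ (hτn s hs) _ (hτn t ht) (hτm.monotone hst)
    · rw [lim_iff]
      have hl := lim_iff.1 hm.limit
      rw [ae_restrict_iff' measurableSet_Ioi, ae_iff] at hl ⊢
      refine measure_mono_null ?_ (addHaar_image_eq_zero_of_differentiableOn_of_addHaar_eq_zero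
        volume (f := r) (fun x _ => (hr x).differentiableAt.differentiableWithinAt) hl)
      intro t ht
      refine ⟨τ t, fun hcon => ht fun ht0 => ?_, h2 t⟩
      have k1 := hcon (hτp t ht0)
      have k2 : Tendsto τ (𝓝[≠] t) (𝓝[≠] (τ t)) :=
        tendsto_nhdsWithin_iff.2 ⟨hτc.continuousAt.mono_left nhdsWithin_le_nhds, by
          filter_upwards [self_mem_nhdsWithin] with s hs
          exact fun e => hs (hτm.injective e)⟩
      have k3 := (hasDerivAt_iff_tendsto_slope.1 (hτd t)).abs
      rw [abs_of_pos (inv_pos.2 (hp _))] at k3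
      refine ((k1.comp k2).mul k3).congr' ?_
      filter_upwards [self_mem_nhdsWithin] with s hs
      have hne : τ s - τ t ≠ 0 := sub_ne_zero.2 fun e => hs (hτm.injective e)
      have hne' : s - t ≠ 0 := sub_ne_zero.2 hs
      simp only [Function.comp, slope_def_field, abs_div]
      have := abs_pos.2 hne
      have := abs_pos.2 hne'
      field_simp
    · intro s hs t ht
      rw [← imIcc, cvi _ measurableSet_Icc]
      simp only [e2]
      exact IntegrableOn.mul_continuousOn (H.adm.2.1.2 _ (hτn s hs) _ (hτn t ht))
        hinvc.continuousOn isCompact_Icc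
  have key : ∀ x, r' x * (wt ε (r x) * (ε / 2 * n (r x) ^ 2 + en φ u (τ (r x)))) =
      wt ε (r x) * (ε / 2 * m x ^ 2 * (r' x)⁻¹ + en φ u x * r' x) := fun x => by
    rw [h1, mul_assoc (ε/2), ← e2]; ring
  have hI : Integrable (fun t => ε / 2 * n t ^ 2 + en φ u (τ t)) (expMeasure ε) := by
    rw [integrable_exp_iff hε, ← imIoi, cvi _ measurableSet_Ioi]
    simp only [key]
    refine ((i1.const_mul (ε / 2)).add i2).congr (Eventually.of_forall fun x => ?_)
    simp only [Pi.add_apply, en]; ring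
  have hc := H.compare hadm MeasurableSet.univ (fun t _ h => absurd (mem_univ t) h)
    hI.integrableOn ((ae_exp_iff hε).2 ?_)
  · rw [setIntegral_univ, setIntegral_univ, integral_exp_eq hε, integral_exp_eq hε] at hc
    rw [integral_exp_eq hε]
    refine hc.trans (le_of_eq ?_)
    conv_lhs => rw [← imIoi, cv _ measurableSet_Ioi]
    simp only [key]
  · filter_upwards [ae_restrict_mem measurableSet_Ioi] with t ht _
    rw [wedIntegrand, H.phi_eq (hτp t ht).le, ← EReal.coe_add]

end Setting

end WED

namespace WED

namespace Setting

variable {X : Type*} [MetricSpace X] {φ : X → EReal} {ε : ℝ} {ubar : X} {u : ℝ → X} {m : ℝ → ℝ}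

/-- Stationarity with respect to the inner variations `t ↦ t + δ ξ(t)`. -/
lemma inner_variation (H : Setting φ ε ubar u m) {ξ ξ' : ℝ → ℝ} (hξ : ∀ t, HasDerivAt ξ (ξ' t) t)
    (hξ'c : Continuous ξ') (hξs : HasCompactSupport ξ) (hξ's : HasCompactSupport ξ')
    (hξ0 : ξ 0 = 0) :
    ∫ t, (-(ξ t / ε) * (ε / 2 * m t ^ 2 + en φ u t) +
      (en φ u t * ξ' t - ε / 2 * m t ^ 2 * ξ' t)) ∂(expMeasure ε) = 0 := by
  have hε := H.hε
  have hξc : Continuous ξ := continuous_iff_continuousAt.2 fun t => (hξ t).continuousAt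
  obtain ⟨M₁, hM₁⟩ := hξs.exists_bound_of_continuous hξc
  obtain ⟨M₂, hM₂⟩ := hξ's.exists_bound_of_continuous hξ'c
  simp only [Real.norm_eq_abs] at hM₁ hM₂
  have hM₁0 : 0 ≤ M₁ := (abs_nonneg _).trans (hM₁ 0)
  have hM₂0 : 0 ≤ M₂ := (abs_nonneg _).trans (hM₂ 0)
  set δ₀ : ℝ := 1 / (2 * (M₂ + 1)) with hδ₀
  have hδ₀p : 0 < δ₀ := by positivity
  have hsmall : ∀ δ, |δ| < δ₀ → ∀ t, |δ * ξ' t| ≤ 1 / 2 := by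
    intro δ hδ t
    rw [abs_mul]
    have := mul_le_mul hδ.le (hM₂ t) (abs_nonneg _) hδ₀p.le
    refine this.trans ?_
    rw [hδ₀, div_mul_eq_mul_div, div_le_div_iff₀ (by positivity) (by norm_num)]
    linarith
  set G : ℝ → ℝ → ℝ := fun δ t => Real.exp (-(δ * ξ t) / ε) *
    (ε / 2 * m t ^ 2 * (1 + δ * ξ' t)⁻¹ + en φ u t * (1 + δ * ξ' t)) with hG
  set G' : ℝ → ℝ → ℝ := fun δ t => Real.exp (-(δ * ξ t) / ε) * (-ξ t / ε) *
    (ε / 2 * m t ^ 2 * (1 + δ * ξ' t)⁻¹ + en φ u t * (1 + δ * ξ' t)) +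
    Real.exp (-(δ * ξ t) / ε) * (ε / 2 * m t ^ 2 * (-ξ' t / (1 + δ * ξ' t) ^ 2) +
      en φ u t * ξ' t) with hG'
  have hmm := H.adm.sq_int
  have hfi : Integrable (en φ u) (expMeasure ε) := H.wed_int.2
  have hmeasG : ∀ δ, AEStronglyMeasurable (G δ) (expMeasure ε) := by
    intro δ
    have c1 : AEStronglyMeasurable (fun t => Real.exp (-(δ * ξ t) / ε)) (expMeasure ε) :=
      Continuous.aestronglyMeasurable (by fun_prop)
    have c2 : AEStronglyMeasurable (fun t => (1 + δ * ξ' t)⁻¹) (expMeasure ε) :=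
      (Continuous.measurable (by fun_prop : Continuous fun t => 1 + δ * ξ' t)).inv.aestronglyMeasurable
    have c3 : AEStronglyMeasurable (fun t => 1 + δ * ξ' t) (expMeasure ε) :=
      Continuous.aestronglyMeasurable (by fun_prop)
    exact c1.mul (((hmm.aestronglyMeasurable.const_mul _).mul c2).add
      (hfi.aestronglyMeasurable.mul c3))
  have hmeasG' : AEStronglyMeasurable (G' 0) (expMeasure ε) := by
    have e : G' 0 = fun t => -ξ t / ε * (ε / 2 * m t ^ 2 + en φ u t) +
        (ε / 2 * m t ^ 2 * (-ξ' t) + en φ u t * ξ' t) := by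
      funext t; simp [hG']
    rw [e]
    have c1 : AEStronglyMeasurable (fun t => -ξ t / ε) (expMeasure ε) :=
      Continuous.aestronglyMeasurable (by fun_prop)
    have c2 : AEStronglyMeasurable ξ' (expMeasure ε) := hξ'c.aestronglyMeasurable
    have c3 := hmm.aestronglyMeasurable.const_mul (ε/2)
    have c4 := hfi.aestronglyMeasurable
    exact (c1.mul (c3.add c4)).add ((c3.mul c2.neg).add (c4.mul c2))
  have hd : ∀ t, ∀ δ ∈ Metric.ball (0:ℝ) δ₀, HasDerivAt (fun δ => G δ t) (G' δ t) δ := by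
    intro t δ hδ
    have hδ' : |δ| < δ₀ := by simpa using hδ
    have hp : 0 < 1 + δ * ξ' t := by linarith [(abs_le.1 (hsmall δ hδ' t)).1]
    have d1 : HasDerivAt (fun δ : ℝ => -(δ * ξ t) / ε) (-ξ t / ε) δ := by
      simpa using (((hasDerivAt_id δ).mul_const (ξ t)).neg.div_const ε)
    have d2 : HasDerivAt (fun δ : ℝ => 1 + δ * ξ' t) (ξ' t) δ := by
      simpa using (((hasDerivAt_id δ).mul_const (ξ' t)).const_add 1)
    exact d1.exp.mul (((d2.fun_inv hp.ne').const_mul _).add (d2.const_mul _))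
  set E := Real.exp (δ₀ * M₁ / ε) with hE
  have hbound : ∀ t, ∀ δ ∈ Metric.ball (0:ℝ) δ₀, ‖G' δ t‖ ≤
      E * (M₁ / ε) * (ε / 2 * m t ^ 2 * 2 + |en φ u t| * 2) +
      E * (ε / 2 * m t ^ 2 * (4 * M₂) + |en φ u t| * M₂) := by
    intro t δ hδ
    have hδ' : |δ| < δ₀ := by simpa using hδ
    obtain ⟨l1, l2⟩ := abs_le.1 (hsmall δ hδ' t)
    have hp : 1 / 2 ≤ 1 + δ * ξ' t := by linarith
    have hexp : |Real.exp (-(δ * ξ t) / ε)| ≤ E := by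
      rw [Real.abs_exp, hE, Real.exp_le_exp]
      gcongr
      have := mul_le_mul hδ'.le (hM₁ t) (abs_nonneg _) hδ₀p.le
      rw [← abs_mul] at this
      linarith [neg_abs_le (δ * ξ t)]
    have hinv : |(1 + δ * ξ' t)⁻¹| ≤ 2 := by
      rw [abs_of_nonneg (inv_nonneg.2 (by linarith))]
      have := inv_anti₀ (by norm_num) hp
      norm_num at this; exact this
    have h1 : |-ξ t / ε| ≤ M₁ / ε := by
      rw [abs_div, abs_neg, abs_of_pos hε]; gcongr; exact hM₁ t
    have h2 : |1 + δ * ξ' t| ≤ 2 := by rw [abs_le]; constructor <;> linarith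
    have h3 : |-ξ' t / (1 + δ * ξ' t) ^ 2| ≤ 4 * M₂ := by
      rw [div_eq_mul_inv, abs_mul, abs_neg, ← inv_pow, abs_pow]
      have := pow_le_pow_left₀ (abs_nonneg _) hinv 2
      have := mul_le_mul (hM₂ t) this (by positivity) hM₂0
      linarith
    have hq : |ε / 2 * m t ^ 2| = ε / 2 * m t ^ 2 := abs_of_nonneg (by positivity)
    have hq0 : 0 ≤ ε / 2 * m t ^ 2 := by positivity
    rw [Real.norm_eq_abs]
    refine (abs_add_le _ _).trans (add_le_add ?_ ?_)
    · rw [abs_mul, abs_mul]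
      refine mul_le_mul (mul_le_mul hexp h1 (abs_nonneg _) (by positivity)) ?_ (abs_nonneg _)
        (by positivity)
      refine (abs_add_le _ _).trans (add_le_add ?_ ?_)
      · rw [abs_mul, hq]; gcongr
      · rw [abs_mul]; gcongr
    · rw [abs_mul]
      refine mul_le_mul hexp ?_ (abs_nonneg _) (by positivity)
      refine (abs_add_le _ _).trans (add_le_add ?_ ?_)
      · rw [abs_mul, hq]; gcongr
      · rw [abs_mul]; gcongr; exact hM₂ t
  have hbi : Integrable (fun t => E * (M₁ / ε) * (ε / 2 * m t ^ 2 * 2 + |en φ u t| * 2) +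
      E * (ε / 2 * m t ^ 2 * (4 * M₂) + |en φ u t| * M₂)) (expMeasure ε) := by
    have a1 := hmm.const_mul (ε/2)
    have a2 := hfi.abs
    exact (((a1.mul_const 2).add (a2.mul_const 2)).const_mul _).add
      (((a1.mul_const _).add (a2.mul_const _)).const_mul _)
  have hG0 : ∀ t, G 0 t = F φ ε u m t := fun t => by simp [hG, F, en]
  have hder := (hasDerivAt_integral_of_dominated_loc_of_deriv_le (μ := expMeasure ε) (F := G)
    (Metric.ball_mem_nhds (0:ℝ) hδ₀p) (Eventually.of_forall hmeasG)
    (H.F_int.congr (Eventually.of_forall fun t => (hG0 t).symm)) hmeasG'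
    (Eventually.of_forall hbound) hbi (Eventually.of_forall hd)).2
  have hlocmin : IsLocalMin (fun δ => ∫ t, G δ t ∂(expMeasure ε)) 0 := by
    filter_upwards [Metric.ball_mem_nhds (0:ℝ) hδ₀p] with δ hδ
    have hδ' : |δ| < δ₀ := by simpa using hδ
    simp only [hG0]
    set r : ℝ → ℝ := fun t => t + δ * ξ t
    have hr : ∀ t, HasDerivAt r (1 + δ * ξ' t) t := fun t =>
      (hasDerivAt_id t).add ((hξ t).const_mul δ)
    have hpos : ∀ t, 1 / 2 ≤ 1 + δ * ξ' t := fun t => by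
      linarith [(abs_le.1 (hsmall δ hδ' t)).1]
    have hrm : StrictMono r := strictMono_of_deriv_pos fun x => by
      rw [(hr x).deriv]; linarith [hpos x]
    have hrc : Continuous r := continuous_iff_continuousAt.2 fun x => (hr x).continuousAt
    have hb : ∀ t, |δ * ξ t| ≤ δ₀ * M₁ := fun t => by
      rw [abs_mul]; exact mul_le_mul hδ'.le (hM₁ t) (abs_nonneg _) hδ₀p.le
    have hsurj : Function.Surjective r := by
      refine hrc.surjective ?_ ?_
      · refine tendsto_atTop_mono (fun t => ?_) (tendsto_atTop_add_const_right atTop (-(δ₀ * M₁)) tendsto_id)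
        simp only [r, id]; linarith [(abs_le.1 (hb t)).1]
      · refine tendsto_atBot_mono (fun t => ?_) (tendsto_atBot_add_const_right atBot (δ₀ * M₁) tendsto_id)
        simp only [r, id]; linarith [(abs_le.1 (hb t)).2]
    obtain ⟨τ, hτ⟩ := hsurj.hasRightInverse
    have hwt : ∀ t, wt ε (r t) = wt ε t * Real.exp (-(δ * ξ t) / ε) := fun t => by
      simp only [wt, r]
      rw [mul_assoc, ← Real.exp_add]; congr 2; ring
    have key := H.reparam (r := r) (τ := τ) hr (by fun_prop) hpos (by simp [r, hξ0])
      (fun x => hrm.injective (hτ (r x))) hτ (K₁ := E) (K₂ := 2) (fun t => by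
        rw [hwt, mul_comm]
        refine mul_le_mul_of_nonneg_right (Real.exp_le_exp.2 ?_) (wt_pos hε t).le
        gcongr
        linarith [(abs_le.1 (hb t)).1]) (fun t => by linarith [(abs_le.1 (hsmall δ hδ' t)).2])
    refine key.trans (le_of_eq ?_)
    rw [integral_exp_eq hε]
    congr 1
    funext t
    rw [hwt]; simp only [hG]; ring
  have h0 := hlocmin.hasDerivAt_eq_zero hder
  rw [← h0]
  congr 1
  funext t
  simp only [hG']; simp; ring

/-- The weak first integral. It is `inner_variation` for `ξ = e^{t/ε} η`. -/
lemma weak_form (H : Setting φ ε ubar u m) {η η' : ℝ → ℝ} (hη : ∀ t, HasDerivAt η (η' t) t)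
    (hη'c : Continuous η') (hηs : HasCompactSupport η) (hη's : HasCompactSupport η')
    (hη0 : η 0 = 0) :
    ∫ t in Ioi 0, (en φ u t * η' t - ε / 2 * m t ^ 2 * η' t - m t ^ 2 * η t) = 0 := by
  have hε := H.hε
  have hηc : Continuous η := continuous_iff_continuousAt.2 fun t => (hη t).continuousAt
  have hd : ∀ t, HasDerivAt (fun t => Real.exp (t / ε) * η t)
      (Real.exp (t / ε) * (1 / ε) * η t + Real.exp (t / ε) * η' t) t := fun t =>
    (((hasDerivAt_id t).div_const ε).exp).mul (hη t)
  have k := H.inner_variation hd (by fun_prop) hηs.mul_left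
    (hηs.mul_left.add hη's.mul_left) (by simp [hη0])
  rw [integral_exp_eq hε] at k
  have e : ∀ t, wt ε t * (-(Real.exp (t / ε) * η t / ε) * (ε / 2 * m t ^ 2 + en φ u t) +
      (en φ u t * (Real.exp (t / ε) * (1 / ε) * η t + Real.exp (t / ε) * η' t) -
        ε / 2 * m t ^ 2 * (Real.exp (t / ε) * (1 / ε) * η t + Real.exp (t / ε) * η' t))) =
      ε⁻¹ * (en φ u t * η' t - ε / 2 * m t ^ 2 * η' t - m t ^ 2 * η t) := fun t => by
    have : Real.exp (-(t / ε)) * Real.exp (t / ε) = 1 := by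
      rw [← Real.exp_add]; simp
    rw [wt, neg_div]
    field_simp
    linear_combination (ε * (2 * en φ u t * η' t - ε * m t ^ 2 * η' t - 2 * m t ^ 2 * η t)) * this
  simp only [e] at k
  rw [integral_const_mul] at k
  exact (mul_eq_zero.1 k).resolve_left (inv_ne_zero hε.ne')

end Setting

end WED

namespace WED

lemma locInt_indicator {ε : ℝ} (hε : 0 < ε) {g : ℝ → ℝ} (hg : Integrable g (expMeasure ε)) :
    LocallyIntegrable (indicator (Ioi 0) g) := by
  rw [locallyIntegrable_iff]
  intro K hK
  obtain ⟨R, hR⟩ := hK.isBounded.subset_closedBall 0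
  rw [Real.closedBall_eq_Icc] at hR
  have : IntegrableOn (indicator (Ioi 0) g) (Icc (0 - R) (0 + R)) := by
    rw [integrableOn_indicator_iff measurableSet_Ioi]
    refine (intOn_of_exp hε hg R).mono_set ?_
    rintro t ⟨h1, h2⟩
    exact ⟨le_of_lt h1, by simpa using h2.2⟩
  exact this.mono_set hR

/-- Du Bois-Reymond lemma: if `G' + M = 0` in the weak sense on `(0,∞)`, then `G + ∫₀ᵗ M` is
constant. -/
lemma duBoisReymond {G M : ℝ → ℝ} (hG : LocallyIntegrable G) (hM : LocallyIntegrable M)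
    (h : ∀ η η' : ℝ → ℝ, (∀ t, HasDerivAt η (η' t) t) → Continuous η' → HasCompactSupport η →
      HasCompactSupport η' → η 0 = 0 → ∫ t, (G t * η' t - M t * η t) = 0) :
    ∃ C : ℝ, ∀ᵐ t, t ∈ Ioi (0:ℝ) → G t + (∫ s in (0:ℝ)..t, M s) = C := by
  have hMi : ∀ a b, IntervalIntegrable M volume a b := fun a b =>
    (hM.integrableOn_isCompact isCompact_uIcc).intervalIntegrable
  have hA : Continuous fun t => ∫ s in (0:ℝ)..t, M s :=
    intervalIntegral.continuous_primitive hMi 0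
  set A : ℝ → ℝ := fun t => ∫ s in (0:ℝ)..t, M s with hAdef
  have hGA : LocallyIntegrable (fun t => G t + A t) := hG.add hA.locallyIntegrable
  let ρ₀ : ContDiffBump (2:ℝ) := ⟨1/2, 1, by norm_num, by norm_num⟩
  set ρ : ℝ → ℝ := ρ₀.normed volume with hρ
  have hρc : Continuous ρ := ρ₀.continuous_normed
  have hρs : HasCompactSupport ρ := ρ₀.hasCompactSupport_normed
  have hρ1 : ∫ t, ρ t = 1 := ρ₀.integral_normed
  have hρz : ∀ t, t ≤ 1 → ρ t = 0 := fun t ht => by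
    by_contra hne
    have : t ∈ Function.support ρ := hne
    rw [hρ, ρ₀.support_normed_eq, Real.ball_eq_Ioo] at this
    have := this.1; simp [ρ₀] at this; linarith
  refine ⟨∫ t, (G t + A t) * ρ t, ?_⟩
  have key := isOpen_Ioi.ae_eq_zero_of_integral_contDiff_smul_eq_zero (μ := volume)
    (U := Ioi (0:ℝ)) (f := fun t => (G t + A t) - ∫ t, (G t + A t) * ρ t)
    ((hGA.sub (locallyIntegrable_const _)).locallyIntegrableOn _) ?_
  · filter_upwards [key] with t ht h0
    linarith [ht h0]
  intro g hg hgs hgU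
  have hgc := hg.continuous
  set I : ℝ := ∫ t, g t with hI
  set η' : ℝ → ℝ := fun t => g t - I * ρ t with hη'
  have hη'c : Continuous η' := by fun_prop
  have hη's : HasCompactSupport η' := hgs.sub hρs.mul_left
  have hη'i : Integrable η' := hη'c.integrable_of_hasCompactSupport hη's
  have hη'0 : ∫ t, η' t = 0 := by
    rw [integral_sub (hgc.integrable_of_hasCompactSupport hgs)
      ((hρc.integrable_of_hasCompactSupport hρs).const_mul _), integral_const_mul, hρ1]
    simp [hI]
  have hneg : ∀ t, t ≤ 0 → η' t = 0 := fun t ht => by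
    have : g t = 0 := image_eq_zero_of_notMem_tsupport fun h => absurd (hgU h) (not_lt.2 ht)
    simp [hη', this, hρz t (by linarith)]
  obtain ⟨R, hR⟩ := hη's.isCompact.isBounded.subset_closedBall 0
  rw [Real.closedBall_eq_Icc] at hR
  have hbig : ∀ t, R < t → η' t = 0 := fun t ht =>
    image_eq_zero_of_notMem_tsupport fun h => by have := (hR h).2; linarith
  set R' := max R 0 + 1 with hR'
  have hR'0 : 0 < R' := by positivity
  have hRR : R < R' := by have := le_max_left R 0; linarith
  set η : ℝ → ℝ := fun t => ∫ s in (0:ℝ)..t, η' s with hη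
  have hd : ∀ t, HasDerivAt η (η' t) t := fun t => hη'c.integral_hasStrictDerivAt 0 t |>.hasDerivAt
  have hηneg : ∀ t, t ≤ 0 → η t = 0 := fun t ht => by
    rw [hη]; simp only
    rw [intervalIntegral.integral_symm, intervalIntegral.integral_of_le ht,
      setIntegral_congr_fun measurableSet_Ioc (g := fun _ => 0) (fun s hs => hneg s hs.2)]
    simp
  have hηbig : ∀ t, R' ≤ t → η t = 0 := fun t ht => by
    rw [hη]; simp only
    rw [intervalIntegral.integral_of_le (by linarith)]
    refine Eq.trans ?_ hη'0
    refine setIntegral_eq_integral_of_forall_compl_eq_zero fun s hs => ?_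
    rcases le_or_gt s 0 with h0 | h0
    · exact hneg s h0
    · refine hbig s ?_
      by_contra hc
      exact hs ⟨h0, by linarith⟩
  have hηs : HasCompactSupport η :=
    HasCompactSupport.intro (isCompact_Icc (a := 0) (b := R')) fun t ht => by
      rcases le_or_gt t 0 with h0 | h0
      · exact hηneg t h0
      · exact hηbig t (by by_contra hc; exact ht ⟨h0.le, by linarith⟩)
  have hηc : Continuous η := continuous_iff_continuousAt.2 fun t => (hd t).continuousAt
  have h1 := h η η' hd hη'c hηs hη's (by simp [hη])
  have iG : Integrable fun t => G t * η' t :=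
    hG.integrable_smul_right_of_hasCompactSupport hη'c hη's
  have iM : Integrable fun t => M t * η t :=
    hM.integrable_smul_right_of_hasCompactSupport hηc hηs
  have iA : Integrable fun t => A t * η' t :=
    (hA.mul hη'c).integrable_of_hasCompactSupport hη's.mul_left
  rw [integral_sub iG iM] at h1
  have h2 := parts_AC (a := -R') (b := R') (c := 0) (hMi _ _)
    (by rw [uIcc_of_le (by linarith)]; exact ⟨by linarith, hR'0.le⟩) hd hη'c
  rw [hηbig R' le_rfl, hηneg (-R') (by linarith)] at h2
  have e1 : ∀ k : ℝ → ℝ, (∀ t, t ≤ 0 → k t = 0) → (∀ t, R' < t → k t = 0) →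
      ∫ t in (-R')..R', k t = ∫ t, k t := fun k hk1 hk2 => by
    rw [intervalIntegral.integral_of_le (by linarith)]
    refine setIntegral_eq_integral_of_forall_compl_eq_zero fun s hs => ?_
    rcases le_or_gt s 0 with h0 | h0
    · exact hk1 s h0
    · refine hk2 s ?_
      by_contra hc
      exact hs ⟨by linarith, by linarith⟩
  rw [e1 (fun t => (∫ s in (0:ℝ)..t, M s) * η' t) (fun t ht => by simp [hneg t ht])
      (fun t ht => by simp [hbig t (by linarith)]),
    e1 (fun t => M t * η t) (fun t ht => by simp [hηneg t ht])
      (fun t ht => by simp [hηbig t ht.le])] at h2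
  have h3 : ∫ t, (G t + A t) * η' t = 0 := by
    simp only [add_mul]
    rw [integral_add iG iA]
    simp only [hAdef] at h2 ⊢
    linarith
  have ig : Integrable fun t => (G t + A t) * g t :=
    hGA.integrable_smul_right_of_hasCompactSupport hgc hgs
  have iρ : Integrable fun t => (G t + A t) * ρ t :=
    hGA.integrable_smul_right_of_hasCompactSupport hρc hρs
  have h4 : ∫ t, (G t + A t) * η' t =
      (∫ t, (G t + A t) * g t) - I * ∫ t, (G t + A t) * ρ t := by
    rw [← integral_const_mul, ← integral_sub ig (iρ.const_mul _)]
    congr 1; funext t; simp only [hη']; ring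
  have h5 : ∫ t, g t • ((G t + A t) - ∫ t, (G t + A t) * ρ t) =
      (∫ t, (G t + A t) * g t) - (∫ t, g t) * ∫ t, (G t + A t) * ρ t := by
    rw [← integral_mul_const, ← integral_sub ig
      ((hgc.integrable_of_hasCompactSupport hgs).mul_const _)]
    congr 1; funext t; simp only [smul_eq_mul]; ring
  rw [h5]; linarith

namespace Setting

variable {X : Type*} [MetricSpace X] {φ : X → EReal} {ε : ℝ} {ubar : X} {u : ℝ → X} {m : ℝ → ℝ}

/-- `∫₀ᵗ |u'|²`, constant for negative times. -/
def act (m : ℝ → ℝ) (t : ℝ) : ℝ := ∫ s in (0:ℝ)..t, indicator (Ioi 0) (fun r => m r ^ 2) s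

lemma sq_exp (H : Setting φ ε ubar u m) : Integrable (fun t => m t ^ 2) (expMeasure ε) :=
  H.adm.sq_int

lemma sqI_locInt (H : Setting φ ε ubar u m) :
    LocallyIntegrable (indicator (Ioi 0) (fun r => m r ^ 2)) :=
  locInt_indicator H.hε H.sq_exp

lemma act_cont (H : Setting φ ε ubar u m) : Continuous (act m) :=
  intervalIntegral.continuous_primitive (fun _ _ =>
    (H.sqI_locInt.integrableOn_isCompact isCompact_uIcc).intervalIntegrable) 0

lemma act_mono (H : Setting φ ε ubar u m) : Monotone (act m) := by
  intro a b hab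
  have hi : ∀ a b, IntervalIntegrable (indicator (Ioi 0) (fun r => m r ^ 2)) volume a b :=
    fun _ _ => (H.sqI_locInt.integrableOn_isCompact isCompact_uIcc).intervalIntegrable
  have : act m b - act m a = ∫ s in a..b, indicator (Ioi 0) (fun r => m r ^ 2) s :=
    intervalIntegral.integral_interval_sub_left (hi _ _) (hi _ _)
  have h2 : 0 ≤ ∫ s in a..b, indicator (Ioi 0) (fun r => m r ^ 2) s :=
    intervalIntegral.integral_nonneg hab fun s _ => indicator_nonneg (fun r _ => sq_nonneg _) s
  linarith

/-- Energy conservation: `φ(u) - (ε/2)|u'|² + ∫₀ᵗ|u'|²` is constant. -/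
lemma first_integral (H : Setting φ ε ubar u m) :
    ∃ C : ℝ, ∀ᵐ t ∂(volume.restrict (Ioi (0:ℝ))), en φ u t - ε / 2 * m t ^ 2 + act m t = C := by
  have hf := locInt_indicator H.hε H.wed_int.2
  obtain ⟨C, hC⟩ := duBoisReymond (G := fun t => indicator (Ioi 0) (fun t => (φ (u t)).toReal) t
    - ε / 2 * indicator (Ioi 0) (fun r => m r ^ 2) t) (hf.sub (H.sqI_locInt.smul (ε / 2))) H.sqI_locInt
    (fun η η' h1 h2 h3 h4 h5 => by
      have := H.weak_form h1 h2 h3 h4 h5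
      rw [← integral_indicator measurableSet_Ioi] at this
      refine Eq.trans ?_ this
      congr 1; funext t
      by_cases ht : t ∈ Ioi (0:ℝ)
      · simp only [indicator_of_mem ht, en]; ring
      · simp [indicator_of_notMem ht])
  refine ⟨C, ?_⟩
  rw [ae_restrict_iff' measurableSet_Ioi]
  filter_upwards [hC] with t ht h0
  rw [← ht h0]
  simp only [indicator_of_mem h0, en, act]

end Setting

end WED

namespace WED

/-! ### Regularity of the speed -/

namespace Setting

variable {X : Type*} [MetricSpace X] {φ : X → EReal} {ε : ℝ} {ubar : X} {u : ℝ → X} {m : ℝ → ℝ}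
  {C : ℝ}

/-- The representative of `(1/2)|u'|²` given by the first integral with constant `C`. -/
def kin (φ : X → EReal) (ε : ℝ) (u : ℝ → X) (m : ℝ → ℝ) (C : ℝ) (t : ℝ) : ℝ :=
  (en φ u t + act m t - C) / ε

/-- `C` is the constant of the first integral. -/
def IsFirst (φ : X → EReal) (ε : ℝ) (u : ℝ → X) (m : ℝ → ℝ) (C : ℝ) : Prop :=
  ∀ᵐ t ∂(volume.restrict (Ioi (0:ℝ))), en φ u t - ε / 2 * m t ^ 2 + act m t = C

lemma kin_ae (H : Setting φ ε ubar u m) (hC : IsFirst φ ε u m C) :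
    ∀ᵐ t ∂(volume.restrict (Ioi (0:ℝ))), kin φ ε u m C t = 1 / 2 * m t ^ 2 := by
  filter_upwards [hC] with t ht
  have := H.hε
  rw [kin, ← ht]; field_simp; ring

lemma kin_mul (H : Setting φ ε ubar u m) (C t : ℝ) :
    ε * kin φ ε u m C t = en φ u t + act m t - C := by
  have := H.hε
  rw [kin]; field_simp

lemma sq_ii (H : Setting φ ε ubar u m) {a b : ℝ} (ha : 0 ≤ a) (hb : 0 ≤ b) :
    IntervalIntegrable (fun t => m t ^ 2) volume a b := by
  have h1 : ∀ c : ℝ, 0 ≤ c → IntervalIntegrable (fun t => m t ^ 2) volume 0 c := fun c hc => by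
    rw [intervalIntegrable_iff_integrableOn_Icc_of_le hc]
    exact intOn_of_exp H.hε H.sq_exp c
  exact (h1 a ha).symm.trans (h1 b hb)

lemma act_eq (H : Setting φ ε ubar u m) {a b : ℝ} (ha : 0 ≤ a) (hab : a ≤ b) :
    act m b - act m a = ∫ s in a..b, m s ^ 2 := by
  have hi : ∀ a b, IntervalIntegrable (indicator (Ioi 0) (fun r => m r ^ 2)) volume a b :=
    fun _ _ => (H.sqI_locInt.integrableOn_isCompact isCompact_uIcc).intervalIntegrable
  have : act m b - act m a = ∫ s in a..b, indicator (Ioi 0) (fun r => m r ^ 2) s :=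
    intervalIntegral.integral_interval_sub_left (hi _ _) (hi _ _)
  rw [this, intervalIntegral.integral_of_le hab, intervalIntegral.integral_of_le hab]
  refine setIntegral_congr_fun measurableSet_Ioc fun s hs => ?_
  exact indicator_of_mem (show s ∈ Ioi (0:ℝ) from lt_of_le_of_lt ha hs.1) _

/-- Transfer of almost everywhere statements to intervals. -/
lemma ae_Ioc {p : ℝ → Prop} (h : ∀ᵐ t ∂(volume.restrict (Ioi (0:ℝ))), p t) {a b : ℝ} (ha : 0 ≤ a) :
    ∀ᵐ t ∂(volume.restrict (Ioc a b)), p t :=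
  ae_mono (Measure.restrict_mono (fun _ ht => lt_of_le_of_lt ha ht.1) le_rfl) h

lemma arc_le_act (H : Setting φ ε ubar u m) {a b : ℝ} (ha : 0 ≤ a) (hab : a ≤ b) :
    arc m b - arc m a ≤ (b - a) + (act m b - act m a) := by
  have hb := ha.trans hab
  rw [H.md.arc_sub ha hb, H.act_eq ha hab]
  have h1 : (b - a) + ∫ s in a..b, m s ^ 2 = ∫ s in a..b, (1 + m s ^ 2) := by
    rw [intervalIntegral.integral_add (by simp) (H.sq_ii ha hb)]; simp
  rw [h1]
  refine intervalIntegral.integral_mono_on hab (H.md.ii ha hb)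
    (IntervalIntegrable.add (by simp) (H.sq_ii ha hb)) fun s _ => ?_
  nlinarith [sq_nonneg (m s - 1), H.md.nonneg s]

lemma arc_of_act (H : Setting φ ε ubar u m) {a b : ℝ} (ha : 0 ≤ a) (hab : a ≤ b)
    (h : act m b = act m a) : arc m a = arc m b := by
  have hb := ha.trans hab
  have h1 := H.act_eq ha hab
  rw [h, sub_self] at h1
  have h2 := (intervalIntegral.integral_eq_zero_iff_of_le_of_nonneg_ae hab
    (Eventually.of_forall fun s => sq_nonneg (m s)) (H.sq_ii ha hb)).1 h1.symm
  have h3 := H.md.arc_sub ha hb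
  rw [intervalIntegral.integral_of_le hab, integral_eq_zero_of_ae] at h3
  · linarith
  · filter_upwards [h2] with s hs
    simpa using hs

lemma exists_kin_zero (H : Setting φ ε ubar u m) (hC : IsFirst φ ε u m C) {a : ℝ} (ha : 0 < a)
    (h : arc m a = 0) : ∃ t ∈ Ioo 0 a, kin φ ε u m C t = 0 := by
  have h2 := (intervalIntegral.integral_eq_zero_iff_of_le_of_nonneg_ae ha.le
    (Eventually.of_forall fun s => H.md.nonneg s) (H.md.ii le_rfl ha.le)).1 h
  have h3 : ∀ᵐ t ∂(expMeasure ε), t < a → kin φ ε u m C t = 0 := by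
    rw [ae_exp_iff H.hε]
    rw [Filter.EventuallyEq, ae_restrict_iff' measurableSet_Ioc] at h2
    filter_upwards [H.kin_ae hC, ae_restrict_of_ae h2, ae_restrict_mem measurableSet_Ioi]
      with t h1 h2 h3 h4
    rw [h1, h2 ⟨h3, h4.le⟩]; simp
  obtain ⟨t, ht, h⟩ := H.exists_fin h3 le_rfl ha
  exact ⟨t, ht, h ht.2⟩

/-- Once the speed vanishes, it vanishes for ever (Gronwall). -/
lemma rest (H : Setting φ ε ubar u m) (hC : IsFirst φ ε u m C) {t₁ t : ℝ} (h1 : 0 ≤ t₁)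
    (hz : kin φ ε u m C t₁ = 0) (ht : t₁ ≤ t) :
    en φ u t = en φ u t₁ ∧ kin φ ε u m C t = 0 := by
  have hε := H.hε
  set D : ℝ → ℝ := fun s => act m s - act m t₁ with hD
  have hDc : Continuous D := H.act_cont.sub continuous_const
  have hD0 : ∀ s, t₁ ≤ s → 0 ≤ D s := fun s hs => sub_nonneg.2 (H.act_mono hs)
  have hDle : ∀ s, t₁ ≤ s → D s ≤ 2 / ε * ∫ r in t₁..s, D r := fun s hs => by
    simp only [hD]
    rw [H.act_eq h1 hs, ← intervalIntegral.integral_const_mul]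
    refine intervalIntegral.integral_mono_ae_restrict hs (H.sq_ii h1 (h1.trans hs))
      ((hDc.const_mul _).intervalIntegrable _ _) ?_
    rw [← restrict_Ioc_eq_restrict_Icc]
    filter_upwards [ae_Ioc (H.kin_ae hC) h1 (b := s), ae_restrict_mem measurableSet_Ioc] with r hr hm
    have e1 := H.kin_mul C r
    have e2 := H.kin_mul C t₁
    have e3 := H.en_antitone (mem_Ici.2 h1) (mem_Ici.2 (h1.trans hm.1.le)) hm.1.le
    rw [hz] at e2
    have e4 : ε * kin φ ε u m C r ≤ act m r - act m t₁ := by linarith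
    have e5 : m r ^ 2 = 2 * kin φ ε u m C r := by rw [hr]; ring
    rw [e5, div_mul_eq_mul_div, le_div_iff₀ hε]
    linarith
  have hY := norm_le_gronwallBound_of_norm_deriv_right_le (f := fun s => ∫ r in t₁..s, D r)
    (f' := D) (δ := 0) (K := 2 / ε) (ε := 0) (a := t₁) (b := t)
    (intervalIntegral.continuous_primitive (fun _ _ => hDc.intervalIntegrable _ _) _).continuousOn
    (fun s _ => (hDc.integral_hasStrictDerivAt t₁ s).hasDerivAt.hasDerivWithinAt)
    (by simp) (fun s hs => by
      rw [Real.norm_of_nonneg (hD0 s hs.1), add_zero, Real.norm_of_nonneg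
        (intervalIntegral.integral_nonneg hs.1 fun r hr => hD0 r hr.1)]
      exact hDle s hs.1) t ⟨ht, le_rfl⟩
  rw [gronwallBound_ε0_δ0] at hY
  have hY0 : ∫ r in t₁..t, D r = 0 := norm_le_zero_iff.1 hY
  have hDt := hDle t ht
  rw [hY0, mul_zero] at hDt
  have hact : act m t = act m t₁ := by
    have := hD0 t ht
    simp only [hD] at hDt this; linarith
  have hen := H.en_const h1 ht (H.arc_of_act h1 ht hact)
  refine ⟨hen.symm, ?_⟩
  rw [← hz, kin, kin, hact, hen]

lemma kin_bound (H : Setting φ ε ubar u m) (C : ℝ) {t b : ℝ} (ht : 0 ≤ t) (htb : t ≤ b) :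
    kin φ ε u m C t ≤ (en φ u 0 + act m b - C) / ε := by
  have := H.hε
  rw [kin]
  have h1 := H.en_antitone self_mem_Ici (mem_Ici.2 ht) ht
  have h2 := H.act_mono htb
  gcongr

lemma act_lip (H : Setting φ ε ubar u m) (hC : IsFirst φ ε u m C) {b : ℝ} :
    ∃ K, 0 ≤ K ∧ ∀ s t, 0 ≤ s → s ≤ t → t ≤ b → act m t - act m s ≤ K * (t - s) := by
  refine ⟨max 0 (2 * ((en φ u 0 + act m b - C) / ε)), le_max_left _ _, fun s t hs hst htb => ?_⟩
  rw [H.act_eq hs hst]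
  have : ∫ r in s..t, max 0 (2 * ((en φ u 0 + act m b - C) / ε)) =
      max 0 (2 * ((en φ u 0 + act m b - C) / ε)) * (t - s) := by simp [mul_comm]
  rw [← this]
  refine intervalIntegral.integral_mono_ae_restrict hst (H.sq_ii hs (hs.trans hst)) (by simp) ?_
  rw [← restrict_Ioc_eq_restrict_Icc]
  filter_upwards [ae_Ioc (H.kin_ae hC) hs (b := t), ae_restrict_mem measurableSet_Ioc] with r hr hm
  have := H.kin_bound C (hs.trans hm.1.le) (hm.2.trans htb)
  exact le_max_of_le_right (by rw [hr] at this; linarith)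

lemma en_lip (H : Setting φ ε ubar u m) (hC : IsFirst φ ε u m C) {a b : ℝ} (ha : 0 < a) :
    ∃ L, 0 ≤ L ∧ ∀ s t, a ≤ s → s ≤ t → t ≤ b → en φ u s - en φ u t ≤ L * (t - s) := by
  rcases (H.md.arc_mono le_rfl ha.le).eq_or_lt with h0 | h0
  · rw [arc_zero] at h0
    obtain ⟨t₁, ht₁, hz⟩ := H.exists_kin_zero hC ha h0.symm
    refine ⟨0, le_rfl, fun s t hs hst _ => ?_⟩
    rw [(H.rest hC ht₁.1.le hz (ht₁.2.le.trans hs)).1,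
      (H.rest hC ht₁.1.le hz (ht₁.2.le.trans (hs.trans hst))).1]
    simp
  · rw [arc_zero] at h0
    obtain ⟨K, hK, hlip⟩ := H.act_lip hC (b := b)
    set E := |en φ u 0 - en φ u b| with hE
    refine ⟨(1 + K) * E / arc m a, by positivity, fun s t hs hst htb => ?_⟩
    have hs0 := ha.le.trans hs
    have h1 := H.arc_convex (le_refl (0:ℝ)) hs0 hst
    simp only [arc_zero, sub_zero] at h1
    have h2 := H.md.arc_mono ha.le hs
    have h3 := H.md.arc_mono hs0 hst
    have h4 := H.arc_le_act hs0 hst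
    have h5 := hlip s t hs0 hst htb
    have h6 : en φ u 0 - en φ u s ≤ E := by
      have := H.en_antitone (mem_Ici.2 hs0) (mem_Ici.2 (hs0.trans (hst.trans htb))) (hst.trans htb)
      exact le_trans (by linarith) (le_abs_self _)
    have hE0 : 0 ≤ E := abs_nonneg _
    have h7 := H.en_antitone (mem_Ici.2 hs0) (mem_Ici.2 (hs0.trans hst)) hst
    rw [div_mul_eq_mul_div, le_div_iff₀ h0]
    calc (en φ u s - en φ u t) * arc m a ≤ (en φ u s - en φ u t) * arc m s :=
          mul_le_mul_of_nonneg_left h2 (by linarith)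
      _ ≤ (arc m t - arc m s) * (en φ u 0 - en φ u s) := by linarith
      _ ≤ (arc m t - arc m s) * E := mul_le_mul_of_nonneg_left h6 (by linarith)
      _ ≤ ((1 + K) * (t - s)) * E := mul_le_mul_of_nonneg_right (by linarith) hE0
      _ = _ := by ring

lemma kin_lip (H : Setting φ ε ubar u m) (hC : IsFirst φ ε u m C) {a b : ℝ} (ha : 0 < a) :
    ∃ K : NNReal, LipschitzOnWith K (kin φ ε u m C) (Icc a b) := by
  have hε := H.hε
  obtain ⟨K, hK, h1⟩ := H.act_lip hC (b := b)
  obtain ⟨L, hL, h2⟩ := H.en_lip hC (b := b) ha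
  have key : ∀ s t, a ≤ s → s ≤ t → t ≤ b →
      |kin φ ε u m C s - kin φ ε u m C t| ≤ (K + L) / ε * (t - s) := fun s t hs hst htb => by
    have hs0 := ha.le.trans hs
    have e1 := H.en_antitone (mem_Ici.2 hs0) (mem_Ici.2 (hs0.trans hst)) hst
    have e2 := H.act_mono hst
    have e3 := h1 s t hs0 hst htb
    have e4 := h2 s t hs hst htb
    have e5 : kin φ ε u m C s - kin φ ε u m C t =
      ((en φ u s - en φ u t) - (act m t - act m s)) / ε := by rw [kin, kin]; ring
    rw [e5, abs_div, abs_of_pos hε, div_mul_eq_mul_div]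
    gcongr
    rw [abs_le]; constructor <;> nlinarith
  refine ⟨⟨(K + L) / ε, by positivity⟩, LipschitzOnWith.of_dist_le_mul fun s hs t ht => ?_⟩
  rw [Real.dist_eq, Real.dist_eq]
  change _ ≤ (K + L) / ε * _
  rcases le_total s t with h | h
  · have := key s t hs.1 h ht.2
    rwa [abs_sub_comm s t, abs_of_nonneg (sub_nonneg.2 h)]
  · have := key t s ht.1 h hs.2
    rwa [abs_sub_comm, abs_of_nonneg (sub_nonneg.2 h)]

lemma en_lip' (H : Setting φ ε ubar u m) (hC : IsFirst φ ε u m C) {a b : ℝ} (ha : 0 < a) :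
    ContinuousOn (en φ u) (Icc a b) := by
  obtain ⟨K, hK⟩ := H.kin_lip hC (b := b) ha
  have : en φ u = fun t => ε * kin φ ε u m C t - act m t + C := by
    funext t; rw [H.kin_mul]; ring
  rw [this]
  exact ((hK.continuousOn.const_mul _ ).sub H.act_cont.continuousOn).add continuousOn_const

lemma kin_cont (H : Setting φ ε ubar u m) (hC : IsFirst φ ε u m C) :
    ContinuousOn (kin φ ε u m C) (Ioi 0) := fun t ht => by
  obtain ⟨K, hK⟩ := H.kin_lip hC (a := t / 2) (b := t + 1) (half_pos ht)
  exact (hK.continuousOn.continuousAt (Icc_mem_nhds (half_lt_self ht) (lt_add_one t))).continuousWithinAt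

lemma en_cont (H : Setting φ ε ubar u m) (hC : IsFirst φ ε u m C) :
    ContinuousOn (en φ u) (Ioi 0) := fun t ht =>
  ((H.en_lip' hC (a := t / 2) (b := t + 1) (half_pos ht)).continuousAt
    (Icc_mem_nhds (half_lt_self ht) (lt_add_one t))).continuousWithinAt

lemma kin_nonneg (H : Setting φ ε ubar u m) (hC : IsFirst φ ε u m C) {t : ℝ} (ht : 0 < t) :
    0 ≤ kin φ ε u m C t := by
  by_contra hneg
  push Not at hneg
  have h1 := ((H.kin_cont hC).continuousAt (Ioi_mem_nhds ht)).eventually_lt continuousAt_const hneg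
  obtain ⟨a, b, hab, hsub⟩ := mem_nhds_iff_exists_Ioo_subset.1 (h1.and (Ioi_mem_nhds ht))
  have h2 := H.kin_ae hC
  rw [← ae_exp_iff H.hε] at h2
  obtain ⟨s, hs, h3⟩ := H.exists_fin h2 ht.le hab.2
  have h4 : kin φ ε u m C s < 0 := (hsub ⟨hab.1.trans hs.1, hs.2⟩).1
  rw [h3] at h4
  nlinarith [sq_nonneg (m s)]

/-- The continuous representative of the speed `|u'|`. -/
def spd (φ : X → EReal) (ε : ℝ) (u : ℝ → X) (m : ℝ → ℝ) (C : ℝ) (t : ℝ) : ℝ :=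
  √(2 * kin φ ε u m C t)

lemma spd_nonneg (t : ℝ) : 0 ≤ spd φ ε u m C t := Real.sqrt_nonneg _

lemma spd_sq (H : Setting φ ε ubar u m) (hC : IsFirst φ ε u m C) {t : ℝ} (ht : 0 < t) :
    spd φ ε u m C t ^ 2 = 2 * kin φ ε u m C t :=
  Real.sq_sqrt (by linarith [H.kin_nonneg hC ht])

lemma spd_cont (H : Setting φ ε ubar u m) (hC : IsFirst φ ε u m C) :
    ContinuousOn (spd φ ε u m C) (Ioi 0) :=
  Real.continuous_sqrt.comp_continuousOn ((H.kin_cont hC).const_mul 2)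

lemma spd_ae (H : Setting φ ε ubar u m) (hC : IsFirst φ ε u m C) :
    ∀ᵐ t ∂(volume.restrict (Ioi (0:ℝ))), m t = spd φ ε u m C t := by
  filter_upwards [H.kin_ae hC] with t ht
  rw [spd, ht, show 2 * (1 / 2 * m t ^ 2) = m t ^ 2 by ring, Real.sqrt_sq (H.md.nonneg t)]

lemma spd_rest (H : Setting φ ε ubar u m) (hC : IsFirst φ ε u m C) {t₁ t : ℝ} (h1 : 0 < t₁)
    (hz : spd φ ε u m C t₁ = 0) (ht : t₁ ≤ t) : spd φ ε u m C t = 0 := by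
  have h2 := H.spd_sq hC h1
  rw [hz] at h2
  have := (H.rest hC h1.le (by linarith) ht).2
  rw [spd, this]; simp

lemma spd_pos (H : Setting φ ε ubar u m) (hC : IsFirst φ ε u m C) {t₁ t : ℝ} (h1 : 0 < t₁)
    (ht : t₁ ≤ t) (hp : 0 < spd φ ε u m C t) : 0 < spd φ ε u m C t₁ :=
  (spd_nonneg t₁).lt_of_ne fun h => hp.ne' (H.spd_rest hC h1 h.symm ht)

lemma spd_ii (H : Setting φ ε ubar u m) (hC : IsFirst φ ε u m C) {a b : ℝ} (ha : 0 < a)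
    (hb : 0 < b) : IntervalIntegrable (spd φ ε u m C) volume a b :=
  ((H.spd_cont hC).mono fun _ ht => (lt_min ha hb).trans_le ht.1).intervalIntegrable

lemma arc_spd (H : Setting φ ε ubar u m) (hC : IsFirst φ ε u m C) {a b : ℝ} (ha : 0 < a)
    (hab : a ≤ b) : arc m b - arc m a = ∫ r in a..b, spd φ ε u m C r := by
  rw [H.md.arc_sub ha.le (ha.le.trans hab), intervalIntegral.integral_of_le hab,
    intervalIntegral.integral_of_le hab]
  exact integral_congr_ae (ae_Ioc (H.spd_ae hC) ha.le)

lemma act_spd (H : Setting φ ε ubar u m) (hC : IsFirst φ ε u m C) {a b : ℝ} (ha : 0 < a)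
    (hab : a ≤ b) : act m b - act m a = ∫ r in a..b, spd φ ε u m C r ^ 2 := by
  rw [H.act_eq ha.le hab, intervalIntegral.integral_of_le hab,
    intervalIntegral.integral_of_le hab]
  refine integral_congr_ae ?_
  filter_upwards [ae_Ioc (H.spd_ae hC) ha.le (b := b)] with t ht
  rw [ht]

end Setting

end WED

namespace WED

namespace Setting

variable {X : Type*} [MetricSpace X] {φ : X → EReal} {ε : ℝ} {ubar : X} {u : ℝ → X} {m : ℝ → ℝ}
  {C : ℝ}

lemma arc_deriv (H : Setting φ ε ubar u m) (hC : IsFirst φ ε u m C) {t : ℝ} (ht : 0 < t) :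
    HasDerivAt (arc m) (spd φ ε u m C t) t := by
  have h1 : HasDerivAt (fun z => arc m (t / 2) + ∫ r in (t/2)..z, spd φ ε u m C r)
      (spd φ ε u m C t) t :=
    (intervalIntegral.integral_hasDerivAt_right (H.spd_ii hC (half_pos ht) ht)
      ((H.spd_cont hC).stronglyMeasurableAtFilter isOpen_Ioi t ht)
      ((H.spd_cont hC).continuousAt (Ioi_mem_nhds ht))).const_add _
  refine h1.congr_of_eventuallyEq ?_
  filter_upwards [Ioi_mem_nhds (half_lt_self ht)] with z hz
  rw [← H.arc_spd hC (half_pos ht) (le_of_lt hz)]; ring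

lemma act_deriv (H : Setting φ ε ubar u m) (hC : IsFirst φ ε u m C) {t : ℝ} (ht : 0 < t) :
    HasDerivAt (act m) (spd φ ε u m C t ^ 2) t := by
  have hc := (H.spd_cont hC).pow 2
  have h1 : HasDerivAt (fun z => act m (t / 2) + ∫ r in (t/2)..z, spd φ ε u m C r ^ 2)
      (spd φ ε u m C t ^ 2) t :=
    (intervalIntegral.integral_hasDerivAt_right
      ((hc.mono fun _ h => (lt_min (half_pos ht) ht).trans_le h.1).intervalIntegrable)
      (hc.stronglyMeasurableAtFilter isOpen_Ioi t ht)
      (hc.continuousAt (Ioi_mem_nhds ht))).const_add _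
  refine h1.congr_of_eventuallyEq ?_
  filter_upwards [Ioi_mem_nhds (half_lt_self ht)] with z hz
  rw [← H.act_spd hC (half_pos ht) (le_of_lt hz)]; ring

lemma spd_lip (H : Setting φ ε ubar u m) (hC : IsFirst φ ε u m C) {a b : ℝ} (ha : 0 < a)
    (hab : a ≤ b) (hpos : 0 < spd φ ε u m C b) :
    ∃ K : NNReal, LipschitzOnWith K (spd φ ε u m C) (Icc a b) := by
  obtain ⟨K, hK⟩ := H.kin_lip hC (b := b) ha
  obtain ⟨z, hz, hmin⟩ := isCompact_Icc.exists_isMinOn (nonempty_Icc.2 hab)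
    ((H.spd_cont hC).mono fun t ht => ha.trans_le ht.1)
  set δ := spd φ ε u m C z with hδ
  have hδ0 : 0 < δ := H.spd_pos hC (ha.trans_le hz.1) hz.2 hpos
  refine ⟨⟨K / δ, by positivity⟩, LipschitzOnWith.of_dist_le_mul fun s hs t ht => ?_⟩
  have h1 := hK.dist_le_mul s hs t ht
  rw [Real.dist_eq] at h1 ⊢
  change _ ≤ K / δ * _
  have e1 := H.spd_sq hC (ha.trans_le hs.1)
  have e2 := H.spd_sq hC (ha.trans_le ht.1)
  have m1 : δ ≤ spd φ ε u m C s := hmin hs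
  have m2 : δ ≤ spd φ ε u m C t := hmin ht
  have e3 : |spd φ ε u m C s - spd φ ε u m C t| * (spd φ ε u m C s + spd φ ε u m C t) =
      2 * |kin φ ε u m C s - kin φ ε u m C t| := by
    rw [← abs_of_pos (show 0 < spd φ ε u m C s + spd φ ε u m C t by linarith), ← abs_mul,
      ← abs_of_pos (show (0:ℝ) < 2 by norm_num), ← abs_mul]
    congr 1
    linear_combination e1 - e2
  rw [div_mul_eq_mul_div, le_div_iff₀ hδ0]
  nlinarith [abs_nonneg (spd φ ε u m C s - spd φ ε u m C t)]

/-- If `σ (φ∘u - k x)` is nondecreasing on an interval of positive speed, `x` being the arc length,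
then so is `σ e^{-t/ε} (|u'| + k)`. Formally, the first integral gives
`ε |u'|' = |u'| + (φ∘u)' / |u'|`. -/
lemma line (H : Setting φ ε ubar u m) (hC : IsFirst φ ε u m C) {a b k σ : ℝ} (ha : 0 < a)
    (hab : a ≤ b) (hpos : 0 < spd φ ε u m C b)
    (hmono : MonotoneOn (fun t => σ * (en φ u t - k * arc m t)) (Icc a b)) :
    σ * (Real.exp (-a / ε) * (spd φ ε u m C a + k)) ≤
      σ * (Real.exp (-b / ε) * (spd φ ε u m C b + k)) := by
  have hε := H.hε
  obtain ⟨K, hK⟩ := H.spd_lip hC ha hab hpos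
  rw [← uIcc_of_le hab] at hK
  have hac := hK.absolutelyContinuousOnInterval
  have hac2 : AbsolutelyContinuousOnInterval
      (fun t => (σ * Real.exp (-t / ε)) * (spd φ ε u m C t + k)) a b := by
    refine AbsolutelyContinuousOnInterval.fun_mul ?_ (hac.add ?_)
    · exact ContDiffOn.absolutelyContinuousOnInterval (by fun_prop)
    · exact ContDiffOn.absolutelyContinuousOnInterval (f := fun _ => k) contDiffOn_const
  have h1 := hac2.integral_deriv_eq_sub
  have h2 : 0 ≤ ∫ t in a..b, deriv (fun t => (σ * Real.exp (-t / ε)) * (spd φ ε u m C t + k)) t := by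
    refine intervalIntegral.integral_nonneg_of_ae_restrict hab ?_
    have hd := hac.ae_differentiableAt
    rw [uIcc_of_le hab] at hd
    rw [← restrict_Ioo_eq_restrict_Icc]
    filter_upwards [ae_restrict_of_ae hd, ae_restrict_mem measurableSet_Ioo] with t ht hm
    have ht0 : 0 < t := ha.trans hm.1
    have hp := (ht (Ioo_subset_Icc_self hm)).hasDerivAt
    set p' := deriv (spd φ ε u m C) t
    have hpt : 0 < spd φ ε u m C t := H.spd_pos hC ht0 hm.2.le hpos
    have hkin : HasDerivAt (kin φ ε u m C) (spd φ ε u m C t * p') t := by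
      have := (hp.pow 2).div_const 2
      refine (this.congr_of_eventuallyEq ?_).congr_deriv (by simp; ring)
      filter_upwards [Ioi_mem_nhds ht0] with z hz
      simp only [Pi.pow_apply]
      rw [H.spd_sq hC hz]; ring
    have hQ : HasDerivAt (fun t => σ * (en φ u t - k * arc m t))
        (σ * (ε * (spd φ ε u m C t * p') - spd φ ε u m C t ^ 2 - k * spd φ ε u m C t)) t := by
      have := (((hkin.const_mul ε).sub (H.act_deriv hC ht0)).sub
        ((H.arc_deriv hC ht0).const_mul k)).add_const C |>.const_mul σ
      refine this.congr_of_eventuallyEq (Eventually.of_forall fun z => ?_)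
      have := H.kin_mul C z
      simp only [Pi.sub_apply]
      rw [this]; ring
    have hQ0 : 0 ≤ σ * (ε * (spd φ ε u m C t * p') - spd φ ε u m C t ^ 2 -
        k * spd φ ε u m C t) := by
      have := (hmono.mono Ioo_subset_Icc_self).derivWithin_nonneg (x := t)
      rwa [hQ.hasDerivWithinAt.derivWithin (isOpen_Ioo.uniqueDiffWithinAt hm)] at this
    have hexp : HasDerivAt (fun t => σ * Real.exp (-t / ε)) (σ * (Real.exp (-t / ε) * (-1 / ε))) t :=
      (((hasDerivAt_id t).neg.div_const ε).exp).const_mul σ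
    have hfin := hexp.mul (hp.add_const k)
    have e : deriv (fun t => (σ * Real.exp (-t / ε)) * (spd φ ε u m C t + k)) t =
      Real.exp (-t / ε) / (ε * spd φ ε u m C t) *
      (σ * (ε * (spd φ ε u m C t * p') - spd φ ε u m C t ^ 2 - k * spd φ ε u m C t)) := by
      refine hfin.deriv.trans ?_
      field_simp
      ring
    rw [e]
    exact mul_nonneg (by positivity) hQ0
  rw [h1] at h2
  linarith

end Setting

end WED

namespace WED

/-! ### Support functions of the speed -/

namespace Setting

variable {X : Type*} [MetricSpace X] {φ : X → EReal} {ε : ℝ} {ubar : X} {u : ℝ → X} {m : ℝ → ℝ}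
  {C : ℝ}

lemma arc_lt (H : Setting φ ε ubar u m) (hC : IsFirst φ ε u m C) {a b : ℝ} (ha : 0 < a)
    (hab : a < b) (hpos : 0 < spd φ ε u m C a) : arc m a < arc m b := by
  refine (H.md.arc_mono ha.le hab.le).lt_of_ne fun he => ?_
  rw [← sub_eq_zero, ← neg_eq_zero, neg_sub, H.arc_spd hC ha hab.le] at he
  have h1 := (H.spd_cont hC).mono (fun t (ht : t ∈ Icc a b) => ha.trans_le ht.1)
  have := intervalIntegral.integral_pos hab h1 (fun t _ => spd_nonneg t)
    ⟨a, ⟨le_rfl, hab.le⟩, hpos⟩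
  exact this.ne' he

/-- A subdifferential of the energy as a function of arc length. -/
lemma exists_slope (H : Setting φ ε ubar u m) (hC : IsFirst φ ε u m C) {t₀ : ℝ} (h0 : 0 < t₀)
    (hpos : 0 < spd φ ε u m C t₀) :
    ∃ k ≤ 0, ∀ t, 0 < t → en φ u t₀ + k * (arc m t - arc m t₀) ≤ en φ u t := by
  have hl : ∀ t, 0 < t → t < t₀ → arc m t < arc m t₀ := fun t ht htt =>
    H.arc_lt hC ht htt (H.spd_pos hC ht htt.le hpos)
  have hr : ∀ t, t₀ < t → arc m t₀ < arc m t := fun t htt => H.arc_lt hC h0 htt hpos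
  set S : Set ℝ := (fun t => (en φ u t₀ - en φ u t) / (arc m t₀ - arc m t)) '' Ioo 0 t₀ with hS
  have hne : S.Nonempty := (nonempty_Ioo.2 h0).image _
  have hub : ∀ t, t₀ < t → ∀ y ∈ S, y ≤ (en φ u t - en φ u t₀) / (arc m t - arc m t₀) := by
    rintro t htt _ ⟨s, hs, rfl⟩
    have h1 := hl s hs.1 hs.2
    have h2 := hr t htt
    have h3 := H.arc_convex hs.1.le hs.2.le htt.le
    simp only
    rw [div_le_div_iff₀ (by linarith) (by linarith)]
    nlinarith
  have hbdd : BddAbove S := ⟨_, hub (t₀ + 1) (by linarith)⟩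
  refine ⟨sSup S, csSup_le hne ?_, fun t ht => ?_⟩
  · rintro _ ⟨s, hs, rfl⟩
    have := H.en_antitone (mem_Ici.2 hs.1.le) (mem_Ici.2 h0.le) hs.2.le
    exact div_nonpos_of_nonpos_of_nonneg (by linarith) (by linarith [hl s hs.1 hs.2])
  · rcases lt_trichotomy t t₀ with h | h | h
    · have h1 := le_csSup hbdd (mem_image_of_mem _ (show t ∈ Ioo 0 t₀ from ⟨ht, h⟩))
      rw [div_le_iff₀ (by linarith [hl t ht h])] at h1
      linarith
    · simp [h]
    · have h1 := csSup_le hne (hub t h)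
      rw [le_div_iff₀ (by linarith [hr t h])] at h1
      linarith

/-- The graph of the speed is supported from below, at every point, by a function
`α e^{t/ε} - k`. -/
lemma support (H : Setting φ ε ubar u m) (hC : IsFirst φ ε u m C) {t₀ : ℝ} (h0 : 0 < t₀) :
    ∃ α k : ℝ, spd φ ε u m C t₀ = α * Real.exp (t₀ / ε) - k ∧
      ∀ t, 0 < t → α * Real.exp (t / ε) - k ≤ spd φ ε u m C t := by
  have hε := H.hε
  rcases (spd_nonneg (φ := φ) (ε := ε) (u := u) (m := m) (C := C) t₀).eq_or_lt with hz | hpos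
  · exact ⟨0, 0, by simp [← hz], fun t _ => by simpa using spd_nonneg t⟩
  obtain ⟨k, hk0, hk⟩ := H.exists_slope hC h0 hpos
  have hexp : ∀ t, Real.exp (-t / ε) * Real.exp (t / ε) = 1 := fun t => by
    rw [← Real.exp_add, neg_div]; simp
  set α := Real.exp (-t₀ / ε) * (spd φ ε u m C t₀ + k) with hα
  -- right of `t₀`, as long as the speed is positive
  have hright : ∀ t, t₀ ≤ t → 0 < spd φ ε u m C t →
      α * Real.exp (t / ε) - k ≤ spd φ ε u m C t := fun t htt hp => by
    have := H.line hC (a := t₀) (b := t) (k := k) (σ := 1) h0 htt hp (by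
      intro y hy z hz hyz
      simp only [one_mul]
      rcases (h0.le.trans hy.1).eq_or_lt with h | _
      · linarith [hy.1]
      rcases eq_or_lt_of_le hyz with rfl | hlt
      · exact le_rfl
      have h1 := H.arc_convex h0.le hy.1 hyz
      have h2 := hk z (h0.trans_le hz.1)
      have h3 := H.arc_lt hC h0 (hy.1.trans_lt hlt) hpos
      have h4 := H.md.arc_mono (h0.le.trans hy.1) hyz
      have : 0 ≤ (arc m z - arc m t₀) *
          ((en φ u z - k * arc m z) - (en φ u y - k * arc m y)) := by nlinarith
      have := nonneg_of_mul_nonneg_right this (by linarith)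
      linarith)
    rw [one_mul, one_mul, ← hα] at this
    have h5 := mul_le_mul_of_nonneg_right this (Real.exp_pos (t / ε)).le
    have h6 := hexp t
    have h7 : Real.exp (-t / ε) * (spd φ ε u m C t + k) * Real.exp (t / ε) =
        spd φ ε u m C t + k := by linear_combination (spd φ ε u m C t + k) * h6
    linarith
  refine ⟨α, k, ?_, fun t ht => ?_⟩
  · have h6 := hexp t₀
    rw [hα]; linear_combination (-(spd φ ε u m C t₀ + k)) * h6
  rcases le_total t t₀ with htt | htt
  · have := H.line hC (a := t) (b := t₀) (k := k) (σ := -1) ht htt hpos (by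
      intro y hy z hz hyz
      simp only
      have hy0 : 0 < y := ht.trans_le hy.1
      rcases eq_or_lt_of_le hyz with rfl | hlt
      · exact le_rfl
      have h1 := H.arc_convex hy0.le hyz hz.2
      have h2 := hk y hy0
      have h3 := H.arc_lt hC hy0 (hlt.trans_le hz.2) (H.spd_pos hC hy0 hy.2 hpos)
      have h4 := H.md.arc_mono hy0.le hyz
      have : 0 ≤ (arc m t₀ - arc m y) *
          ((en φ u y - k * arc m y) - (en φ u z - k * arc m z)) := by nlinarith
      have := nonneg_of_mul_nonneg_right this (by linarith)
      linarith)
    rw [← hα] at this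
    have h5 := mul_le_mul_of_nonneg_right
      (show α ≤ Real.exp (-t / ε) * (spd φ ε u m C t + k) by linarith) (Real.exp_pos (t / ε)).le
    have h6 := hexp t
    have h7 : Real.exp (-t / ε) * (spd φ ε u m C t + k) * Real.exp (t / ε) =
        spd φ ε u m C t + k := by linear_combination (spd φ ε u m C t + k) * h6
    linarith
  rcases (spd_nonneg (φ := φ) (ε := ε) (u := u) (m := m) (C := C) t).eq_or_lt with hz | hp
  swap
  · exact hright t htt hp
  -- the speed has vanished in between: the support function is nonpositive at the first zero `T`
  have hcI : ContinuousOn (spd φ ε u m C) (Icc t₀ t) :=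
    (H.spd_cont hC).mono fun s hs => h0.trans_le hs.1
  have hcomp : IsCompact (Icc t₀ t ∩ spd φ ε u m C ⁻¹' {0}) :=
    isCompact_Icc.of_isClosed_subset (hcI.preimage_isClosed_of_isClosed isClosed_Icc
      isClosed_singleton) inter_subset_left
  obtain ⟨T, hT, hleast⟩ := hcomp.exists_isLeast ⟨t, ⟨htt, le_rfl⟩, hz.symm⟩
  have hTt : t₀ < T := hT.1.1.lt_of_ne fun h => hpos.ne' (by rw [h]; exact hT.2)
  have hTle : α * Real.exp (T / ε) - k ≤ spd φ ε u m C T := by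
    have hcl : T ∈ closure (Ico t₀ T) := by rw [closure_Ico hTt.ne]; exact ⟨hTt.le, le_rfl⟩
    refine ContinuousWithinAt.closure_le hcl (f := fun s => α * Real.exp (s / ε) - k)
      (Continuous.continuousWithinAt (by fun_prop))
      ((H.spd_cont hC).continuousAt (Ioi_mem_nhds (h0.trans hTt))).continuousWithinAt
      fun s hs => hright s hs.1 ((spd_nonneg s).lt_of_ne fun h => ?_)
    have := hleast ⟨⟨hs.1, hs.2.le.trans hT.1.2⟩, h.symm⟩
    exact absurd hs.2 (not_lt.2 this)
  rw [show spd φ ε u m C T = 0 from hT.2] at hTle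
  have hα0 : α ≤ 0 := by
    by_contra hc
    push Not at hc
    have := mul_pos hc (Real.exp_pos (T / ε))
    linarith
  have hle : Real.exp (T / ε) ≤ Real.exp (t / ε) :=
    Real.exp_le_exp.2 (by have := hT.1.2; gcongr)
  rw [← hz]
  nlinarith

/-- The speed is nonincreasing: otherwise it would grow like `e^{t/ε}`, and `e^{-t/ε}|u'|²` would
not be integrable. -/
lemma spd_anti (H : Setting φ ε ubar u m) (hC : IsFirst φ ε u m C) :
    AntitoneOn (spd φ ε u m C) (Ioi 0) := by
  have hε := H.hε
  intro s hs t ht hst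
  by_contra hlt
  push Not at hlt
  have hst' : s < t := hst.lt_of_ne fun h => by simp [h] at hlt
  obtain ⟨α, k, e, hsup⟩ := H.support hC ht
  have h1 := hsup s hs
  have hE : Real.exp (s / ε) < Real.exp (t / ε) := Real.exp_lt_exp.2 (by gcongr)
  have hα : 0 < α := by
    by_contra hc
    push Not at hc
    nlinarith
  have hint := H.sq_exp
  rw [integrable_exp_iff hε] at hint
  -- beyond `T` the speed is at least `(α/2) e^{t/ε} ≥ α/2`
  have hlim : Tendsto (fun t => α / 2 * Real.exp (t / ε)) atTop atTop :=
    (Real.tendsto_exp_atTop.comp (tendsto_id.atTop_div_const hε)).const_mul_atTop (by positivity)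
  obtain ⟨T, hT⟩ := eventually_atTop.1 ((hlim.eventually_ge_atTop k).and (eventually_gt_atTop 0))
  have hT0 : 0 < T := (hT T le_rfl).2
  have hc : IntegrableOn (fun _ : ℝ => ε⁻¹ * (α / 2) ^ 2) (Ioi T) := by
    refine (hint.mono_set (Ioi_subset_Ioi hT0.le)).mono' (by fun_prop) ?_
    filter_upwards [ae_mono (Measure.restrict_mono (Ioi_subset_Ioi hT0.le) le_rfl) (H.spd_ae hC),
      ae_restrict_mem measurableSet_Ioi] with r hr hrT
    have hr0 : 0 < r := hT0.trans hrT
    have h2 := hsup r hr0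
    have h3 := (hT r (le_of_lt hrT)).1
    rw [hr, Real.norm_of_nonneg (by positivity), wt, mul_assoc]
    refine mul_le_mul_of_nonneg_left ?_ (by positivity)
    have h4 : α / 2 * Real.exp (r / ε) ≤ spd φ ε u m C r := by linarith
    have h5 : Real.exp (-r / ε) * Real.exp (r / ε) = 1 := by
      rw [← Real.exp_add, neg_div]; simp
    have h6 : 1 ≤ Real.exp (r / ε) := Real.one_le_exp (by positivity)
    have h7 : (α / 2 * Real.exp (r / ε)) ^ 2 ≤ spd φ ε u m C r ^ 2 :=
      pow_le_pow_left₀ (by positivity) h4 2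
    calc (α / 2) ^ 2 ≤ (α / 2) ^ 2 * Real.exp (r / ε) := le_mul_of_one_le_right (by positivity) h6
      _ = Real.exp (-r / ε) * (α / 2 * Real.exp (r / ε)) ^ 2 := by
        linear_combination (-((α / 2) ^ 2 * Real.exp (r / ε))) * h5
      _ ≤ _ := mul_le_mul_of_nonneg_left h7 (Real.exp_pos _).le
  have h8 := (integrableOn_const_iff enorm_ne_top).1 hc
  rcases h8 with h | h
  · have : 0 < ε⁻¹ * (α / 2) ^ 2 := by positivity
    exact this.ne' (enorm_eq_zero.1 h)
  · simp at h

lemma kin_anti (H : Setting φ ε ubar u m) (hC : IsFirst φ ε u m C) :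
    AntitoneOn (kin φ ε u m C) (Ioi 0) := fun s hs t ht hst => by
  have h1 := H.spd_anti hC hs ht hst
  have h2 := pow_le_pow_left₀ (spd_nonneg t) h1 2
  rw [H.spd_sq hC hs, H.spd_sq hC ht] at h2
  linarith

/-- Convexity of `(1/2)|u'|²` as a function of `e^{t/ε}`, at the three points
`e^{(t-h)/ε}, e^{t/ε}, e^{(t+h)/ε}`. -/
lemma kin_convex (H : Setting φ ε ubar u m) (hC : IsFirst φ ε u m C) {t h : ℝ} (hm : 0 < t - h)
    (hh : 0 < t) (hp : 0 < t + h) :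
    (Real.exp (h / ε) + 1) * kin φ ε u m C t ≤
      Real.exp (h / ε) * kin φ ε u m C (t - h) + kin φ ε u m C (t + h) := by
  obtain ⟨α, k, e, hsup⟩ := H.support hC hh
  have h1 := hsup _ hm
  have h2 := hsup _ hp
  have q1 := H.spd_sq hC hm
  have q2 := H.spd_sq hC hp
  have q3 := H.spd_sq hC hh
  have e1 : Real.exp (h / ε) * Real.exp ((t - h) / ε) = Real.exp (t / ε) := by
    rw [← Real.exp_add]; congr 1; ring
  have e2 : Real.exp ((t + h) / ε) = Real.exp (h / ε) * Real.exp (t / ε) := by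
    rw [← Real.exp_add]; congr 1; ring
  set r := Real.exp (h / ε)
  have hr : 0 < r := Real.exp_pos _
  set P := spd φ ε u m C t
  set P₁ := spd φ ε u m C (t - h)
  set P₂ := spd φ ε u m C (t + h)
  have hlin : (r + 1) * P ≤ r * P₁ + P₂ := by
    have h3 := mul_le_mul_of_nonneg_left h1 hr.le
    rw [e2] at h2
    have h4 : r * (α * Real.exp ((t - h) / ε) - k) = α * Real.exp (t / ε) - r * k := by
      linear_combination α * e1
    rw [h4] at h3
    rw [e]
    nlinarith
  have hP : 0 ≤ P := spd_nonneg t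
  have hsq : (r + 1) * P ^ 2 ≤ r * P₁ ^ 2 + P₂ ^ 2 := by
    have h5 : ((r + 1) * P) ^ 2 ≤ (r * P₁ + P₂) ^ 2 := pow_le_pow_left₀ (by positivity) hlin 2
    have h6 : (r * P₁ + P₂) ^ 2 ≤ (r + 1) * (r * P₁ ^ 2 + P₂ ^ 2) := by
      nlinarith [mul_nonneg hr.le (sq_nonneg (P₁ - P₂))]
    have h7 : (r + 1) * ((r + 1) * P ^ 2) ≤ (r + 1) * (r * P₁ ^ 2 + P₂ ^ 2) := by
      nlinarith
    exact le_of_mul_le_mul_left h7 (by positivity)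
  rw [q1, q2, q3] at hsq
  linarith

end Setting

end WED

namespace WED

/-! ### Convexity of the energy and the distributional relations -/

lemma parts_line {M η η' : ℝ → ℝ} (hM : LocallyIntegrable M) (hd : ∀ t, HasDerivAt η (η' t) t)
    (hη'c : Continuous η') (hηs : HasCompactSupport η) (hη's : HasCompactSupport η') :
    ∫ t, (∫ s in (0:ℝ)..t, M s) * η' t = -∫ t, M t * η t := by
  obtain ⟨R, hR⟩ := (hηs.isCompact.union hη's.isCompact).isBounded.subset_closedBall 0
  rw [Real.closedBall_eq_Icc] at hR
  set R' := max R 0 + 1 with hR'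
  have hR'0 : 0 < R' := by positivity
  have hRR : R < R' := by have := le_max_left R 0; linarith
  have out : ∀ t, t ∉ Ioo (-R') R' → η t = 0 ∧ η' t = 0 := fun t ht => by
    constructor
    all_goals
      refine image_eq_zero_of_notMem_tsupport fun h => ht ?_
      have := hR (by first | exact Or.inl h | exact Or.inr h)
      exact ⟨by linarith [this.1], by linarith [this.2]⟩
  have h2 := parts_AC (a := -R') (b := R') (c := 0)
    (hM.integrableOn_isCompact isCompact_uIcc).intervalIntegrable
    (by rw [uIcc_of_le (by linarith)]; exact ⟨by linarith, hR'0.le⟩) hd hη'c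
  rw [(out R' (by simp)).1, (out (-R') (by simp)).1] at h2
  have e1 : ∀ k : ℝ → ℝ, (∀ t, t ∉ Ioo (-R') R' → k t = 0) →
      ∫ t in (-R')..R', k t = ∫ t, k t := fun k hk => by
    rw [intervalIntegral.integral_of_le (by linarith)]
    exact setIntegral_eq_integral_of_forall_compl_eq_zero fun s hs =>
      hk s fun h => hs ⟨h.1, h.2.le⟩
  rw [e1 _ fun t ht => by simp [(out t ht).2], e1 _ fun t ht => by simp [(out t ht).1]] at h2
  linarith

lemma continuous_mul_of_tsupport {g ζ : ℝ → ℝ} (hg : ContinuousOn g (Ioi 0)) (hζ : Continuous ζ)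
    (hs : tsupport ζ ⊆ Ioi 0) : Continuous fun t => g t * ζ t :=
  continuous_of_tsupport fun t ht => by
    have h1 : t ∈ Ioi (0:ℝ) := hs (tsupport_mul_subset_right ht)
    exact (hg.continuousAt (isOpen_Ioi.mem_nhds h1)).mul hζ.continuousAt

lemma translate_deriv {g ξ : ℝ → ℝ} (hg : LocallyIntegrable g) (hξ : ContDiff ℝ 1 ξ)
    (hξs : HasCompactSupport ξ) (x : ℝ) :
    HasDerivAt (fun x => ∫ t, g t * ξ (t - x)) (-∫ t, g t * deriv ξ (t - x)) x := by
  have hc : HasCompactSupport fun s => ξ (-s) := hξs.comp_homeomorph (Homeomorph.neg ℝ)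
  have h1 := hc.hasDerivAt_convolution_right (ContinuousLinearMap.lsmul ℝ ℝ) hg
    (hξ.comp contDiff_neg) x
  have hd : deriv (fun s => ξ (-s)) = fun s => -deriv ξ (-s) := by
    funext s; exact deriv_comp_neg ξ s
  rw [hd] at h1
  refine (h1.congr_of_eventuallyEq (Eventually.of_forall fun y => ?_)).congr_deriv ?_
  · simp only [convolution_def, ContinuousLinearMap.lsmul_apply, smul_eq_mul, neg_sub]
  · simp only [convolution_def, ContinuousLinearMap.lsmul_apply, smul_eq_mul, neg_sub, mul_neg,
      integral_neg]

lemma integrable_translate {g ξ : ℝ → ℝ} (hg : LocallyIntegrable g) (hξ : Continuous ξ)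
    (hξs : HasCompactSupport ξ) (x : ℝ) : Integrable fun t => g t * ξ (t - x) :=
  hg.integrable_smul_right_of_hasCompactSupport (by fun_prop)
    (hξs.comp_homeomorph (Homeomorph.subRight x))

/-- If `r g(t-h) + g(t+h) ≥ (r+1) g(t)`, `r = e^{h/ε}`, on the support of `ξ ≥ 0` and for small `h`,
then `∫ g (ξ'' + ξ'/ε) ≥ 0`. The function `J` below is nonnegative near `0`, vanishes to first order
at `0`, and `J''(0) = 2 ∫ g (ξ'' + ξ'/ε)`. -/
lemma weak_convex {ε : ℝ} {g ξ : ℝ → ℝ} (hg : LocallyIntegrable g)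
    (hξ : ContDiff ℝ (⊤ : ℕ∞) ξ) (hξs : HasCompactSupport ξ) (hξ0 : ∀ t, 0 ≤ ξ t) {δ : ℝ} (hδ : 0 < δ)
    (h : ∀ s t, |s| < δ → ξ t ≠ 0 →
      (Real.exp (s / ε) + 1) * g t ≤ Real.exp (s / ε) * g (t - s) + g (t + s)) :
    0 ≤ (∫ t, g t * deriv (deriv ξ) t) + (∫ t, g t * deriv ξ t) / ε := by
  have hξ1 : ContDiff ℝ (⊤ : ℕ∞) (deriv ξ) := (contDiff_infty_iff_deriv.1 hξ).2
  set Θ : ℝ → ℝ := fun x => ∫ t, g t * ξ (t - x) with hΘ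
  set Θ₁ : ℝ → ℝ := fun x => ∫ t, g t * deriv ξ (t - x) with hΘ₁
  set Θ₂ : ℝ → ℝ := fun x => ∫ t, g t * deriv (deriv ξ) (t - x) with hΘ₂
  have d0 : ∀ x, HasDerivAt Θ (-Θ₁ x) x :=
    translate_deriv hg (hξ.of_le (by exact_mod_cast le_top)) hξs
  have d1 : ∀ x, HasDerivAt Θ₁ (-Θ₂ x) x :=
    translate_deriv hg (hξ1.of_le (by exact_mod_cast le_top)) hξs.deriv
  have d0' : ∀ x, HasDerivAt (fun x => Θ (-x)) (Θ₁ (-x)) x := fun x => by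
    have := (d0 (-x)).comp x (hasDerivAt_neg x)
    exact this.congr_deriv (by ring)
  have d1' : ∀ x, HasDerivAt (fun x => Θ₁ (-x)) (Θ₂ (-x)) x := fun x => by
    have := (d1 (-x)).comp x (hasDerivAt_neg x)
    exact this.congr_deriv (by ring)
  have de : ∀ x : ℝ, HasDerivAt (fun x => Real.exp (x / ε)) (Real.exp (x / ε) * (1 / ε)) x :=
    fun x => ((hasDerivAt_id x).div_const ε).exp
  set J : ℝ → ℝ := fun x => Real.exp (x / ε) * Θ (-x) + Θ x - (Real.exp (x / ε) + 1) * Θ 0 with hJ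
  set J₁ : ℝ → ℝ := fun x => Real.exp (x / ε) * (1 / ε) * Θ (-x) + Real.exp (x / ε) * Θ₁ (-x)
    + -Θ₁ x - Real.exp (x / ε) * (1 / ε) * Θ 0 with hJ₁
  have dJ : ∀ x, HasDerivAt J (J₁ x) x := fun x =>
    (((de x).mul (d0' x)).add (d0 x)).sub (((de x).add_const 1).mul_const (Θ 0))
  have dJ₁ : HasDerivAt J₁ (2 * (Θ₂ 0 + Θ₁ 0 / ε)) 0 := by
    have := (((((de 0).mul_const (1 / ε)).mul (d0' 0)).add ((de 0).mul (d1' 0))).add (d1 0).neg).sub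
      (((de 0).mul_const (1 / ε)).mul_const (Θ 0))
    refine this.congr_deriv ?_
    simp only [neg_zero, zero_div, Real.exp_zero]; ring
  have hderJ : deriv J = J₁ := funext fun x => (dJ x).deriv
  have hJ0 : J 0 = 0 := by simp [hJ]; ring
  have hJ₁0 : J₁ 0 = 0 := by simp [hJ₁]
  have hJn : ∀ᶠ x in 𝓝 (0:ℝ), 0 ≤ J x := by
    filter_upwards [Metric.ball_mem_nhds (0:ℝ) hδ] with x hx
    rw [Metric.mem_ball, dist_zero_right, Real.norm_eq_abs] at hx
    have s1 : Θ (-x) = ∫ t, g (t - x) * ξ t := by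
      rw [hΘ]; simp only
      rw [← integral_sub_right_eq_self _ x]; simp
    have s2 : Θ x = ∫ t, g (t + x) * ξ t := by
      rw [hΘ]; simp only
      rw [← integral_add_right_eq_self _ x]; simp
    have s3 : Θ 0 = ∫ t, g t * ξ t := by simp [hΘ]
    have i1 : Integrable fun t => g (t - x) * ξ t := by
      simpa using (integrable_translate hg hξ.continuous hξs (-x)).comp_sub_right x
    have i2 : Integrable fun t => g (t + x) * ξ t := by
      simpa using (integrable_translate hg hξ.continuous hξs x).comp_add_right x
    have i3 : Integrable fun t => g t * ξ t := by
      simpa using integrable_translate hg hξ.continuous hξs 0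
    have : J x = ∫ t, (Real.exp (x / ε) * (g (t - x) * ξ t) + g (t + x) * ξ t -
        (Real.exp (x / ε) + 1) * (g t * ξ t)) := by
      have i12 : Integrable fun t => Real.exp (x / ε) * (g (t - x) * ξ t) + g (t + x) * ξ t :=
        (i1.const_mul _).add i2
      rw [integral_sub i12 (i3.const_mul _),
        integral_add (i1.const_mul _) i2, integral_const_mul, integral_const_mul, ← s1, ← s2, ← s3]
    rw [this]
    refine integral_nonneg fun t => ?_
    by_cases ht : ξ t = 0
    · simp [ht]
    · have h1 := mul_le_mul_of_nonneg_right (h x t hx ht) (hξ0 t)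
      simp only [Pi.zero_apply]
      linarith
  by_contra hneg
  push Not at hneg
  have hT : Θ₂ 0 + Θ₁ 0 / ε < 0 := by simpa [hΘ₂, hΘ₁] using hneg
  have hmax : IsLocalMax J 0 := isLocalMax_of_deriv_deriv_neg
    (by rw [hderJ, dJ₁.deriv]; linarith) (by rw [hderJ, hJ₁0]) (dJ 0).continuousAt
  have hzero : J =ᶠ[𝓝 0] fun _ => 0 := by
    filter_upwards [hmax, hJn] with x h1 h2
    rw [hJ0] at h1
    exact le_antisymm h1 h2
  have hz1 : J₁ =ᶠ[𝓝 0] fun _ => 0 := by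
    have := hzero.deriv
    rw [hderJ] at this
    simpa using this
  have := hz1.deriv_eq
  rw [dJ₁.deriv] at this
  simp at this
  linarith

namespace Setting

variable {X : Type*} [MetricSpace X] {φ : X → EReal} {ε : ℝ} {ubar : X} {u : ℝ → X} {m : ℝ → ℝ}
  {C : ℝ}

/-- The energy is a convex nonincreasing function of the arc length, which is concave in time. -/
lemma en_convex (H : Setting φ ε ubar u m) (hC : IsFirst φ ε u m C) :
    ConvexOn ℝ (Ici 0) (en φ u) := by
  have hx : ConcaveOn ℝ (Ici 0) (arc m) := by
    refine AntitoneOn.concaveOn_of_deriv (convex_Ici 0) H.md.arc_contOn ?_ ?_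
    · rw [interior_Ici]
      exact fun t ht => (H.arc_deriv hC ht).differentiableAt.differentiableWithinAt
    · rw [interior_Ici]
      intro s hs t ht hst
      rw [(H.arc_deriv hC hs).deriv, (H.arc_deriv hC ht).deriv]
      exact H.spd_anti hC hs ht hst
  refine LinearOrder.convexOn_of_lt (convex_Ici 0) fun s hs t ht hst a b ha hb hab => ?_
  have hconc := hx.2 hs ht ha.le hb.le hab
  simp only [smul_eq_mul] at hconc ⊢
  obtain rfl : a = 1 - b := by linarith
  have h1 : s ≤ (1 - b) * s + b * t := by nlinarith
  have h2 : (1 - b) * s + b * t ≤ t := by nlinarith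
  set z := (1 - b) * s + b * t
  have hs0 : (0:ℝ) ≤ s := hs
  have hf1 := H.en_antitone hs (mem_Ici.2 (hs0.trans h1)) h1
  have hf2 := H.en_antitone hs ht hst.le
  rcases (H.md.arc_mono hs0 hst.le).eq_or_lt with he | hlt
  · rw [← H.en_const hs0 hst.le he]; linarith
  · have h3 := H.arc_convex hs0 h1 h2
    have h4 : (arc m t - arc m s) * en φ u z ≤
        (arc m t - arc m s) * ((1 - b) * en φ u s + b * en φ u t) := by nlinarith
    exact le_of_mul_le_mul_left h4 (by linarith)

lemma kin_exp (H : Setting φ ε ubar u m) (hC : IsFirst φ ε u m C) :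
    Integrable (kin φ ε u m C) (expMeasure ε) := by
  refine (H.sq_exp.const_mul (1 / 2)).congr ?_
  have := H.kin_ae hC
  rw [← ae_exp_iff H.hε] at this
  exact this.mono fun t ht => ht.symm

lemma distrib_eq (H : Setting φ ε ubar u m) (hC : IsFirst φ ε u m C) {ξ : ℝ → ℝ}
    (hξ : ContDiff ℝ (⊤ : ℕ∞) ξ) (hξs : HasCompactSupport ξ) (hs : tsupport ξ ⊆ Ioi 0) :
    (-(ε * ∫ t, kin φ ε u m C t * deriv (deriv ξ) t) - ∫ t, kin φ ε u m C t * deriv ξ t) =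
      (-(∫ t, (φ (u t)).toReal * deriv (deriv ξ) t) + ∫ t, kin φ ε u m C t * deriv ξ t) := by
  have hξ1 : ContDiff ℝ (⊤ : ℕ∞) (deriv ξ) := (contDiff_infty_iff_deriv.1 hξ).2
  have hξ2 : ContDiff ℝ (⊤ : ℕ∞) (deriv (deriv ξ)) := (contDiff_infty_iff_deriv.1 hξ1).2
  have hs1 : tsupport (deriv ξ) ⊆ Ioi 0 := tsupport_deriv_subset.trans hs
  have hs2 : tsupport (deriv (deriv ξ)) ⊆ Ioi 0 := tsupport_deriv_subset.trans hs1
  have hd : ∀ t, HasDerivAt (deriv ξ) (deriv (deriv ξ) t) t := fun t =>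
    ((contDiff_infty_iff_deriv.1 hξ1).1 t).hasDerivAt
  have i1 : Integrable fun t => kin φ ε u m C t * deriv (deriv ξ) t :=
    (continuous_mul_of_tsupport (H.kin_cont hC) hξ2.continuous hs2).integrable_of_hasCompactSupport
      hξs.deriv.deriv.mul_left
  have i2 : Integrable (deriv (deriv ξ)) :=
    hξ2.continuous.integrable_of_hasCompactSupport hξs.deriv.deriv
  have i3 : Integrable fun t => act m t * deriv (deriv ξ) t :=
    (H.act_cont.mul hξ2.continuous).integrable_of_hasCompactSupport hξs.deriv.deriv.mul_left
  have z2 : ∫ t, deriv (deriv ξ) t = 0 :=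
    integral_eq_zero_of_hasDerivAt_of_integrable hd i2
      (hξ1.continuous.integrable_of_hasCompactSupport hξs.deriv)
  have e1 : ∫ t, (φ (u t)).toReal * deriv (deriv ξ) t =
      ε * (∫ t, kin φ ε u m C t * deriv (deriv ξ) t) - ∫ t, act m t * deriv (deriv ξ) t := by
    have : ∀ t, (φ (u t)).toReal * deriv (deriv ξ) t =
        (ε * (kin φ ε u m C t * deriv (deriv ξ) t) - act m t * deriv (deriv ξ) t) +
          C * deriv (deriv ξ) t := fun t => by
      have := H.kin_mul C t
      rw [en] at this
      linear_combination (-deriv (deriv ξ) t) * this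
    simp only [this]
    have i13 : Integrable fun t =>
        ε * (kin φ ε u m C t * deriv (deriv ξ) t) - act m t * deriv (deriv ξ) t :=
      (i1.const_mul _).sub i3
    rw [integral_add i13 (i2.const_mul _), integral_sub (i1.const_mul _) i3,
      integral_const_mul, integral_const_mul, z2, mul_zero, add_zero]
  have e2 : ∫ t, act m t * deriv (deriv ξ) t = -(2 * ∫ t, kin φ ε u m C t * deriv ξ t) := by
    have := parts_line H.sqI_locInt hd hξ2.continuous hξs.deriv hξs.deriv.deriv
    refine this.trans ?_
    rw [← integral_const_mul]
    congr 1
    refine integral_congr_ae ?_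
    have hae := H.kin_ae hC
    rw [ae_restrict_iff' measurableSet_Ioi] at hae
    filter_upwards [hae] with t ht
    by_cases h0 : t ∈ Ioi (0:ℝ)
    · rw [indicator_of_mem h0, ht h0]; ring
    · rw [image_eq_zero_of_notMem_tsupport fun h => h0 (hs1 h)]; simp
  rw [e1, e2]; ring

lemma distrib_ineq (H : Setting φ ε ubar u m) (hC : IsFirst φ ε u m C) {ξ : ℝ → ℝ}
    (hξ : ContDiff ℝ (⊤ : ℕ∞) ξ) (hξs : HasCompactSupport ξ) (hs : tsupport ξ ⊆ Ioi 0)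
    (hξ0 : ∀ t, 0 ≤ ξ t) :
    (-(ε * ∫ t, kin φ ε u m C t * deriv (deriv ξ) t) - ∫ t, kin φ ε u m C t * deriv ξ t) ≤ 0 := by
  have hε := H.hε
  have hs1 : tsupport (deriv ξ) ⊆ Ioi 0 := tsupport_deriv_subset.trans hs
  have hs2 : tsupport (deriv (deriv ξ)) ⊆ Ioi 0 := tsupport_deriv_subset.trans hs1
  have hind : ∀ ζ : ℝ → ℝ, tsupport ζ ⊆ Ioi 0 →
      ∫ t, indicator (Ioi 0) (kin φ ε u m C) t * ζ t = ∫ t, kin φ ε u m C t * ζ t := fun ζ hζ => by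
    congr 1; funext t
    by_cases h0 : t ∈ Ioi (0:ℝ)
    · rw [indicator_of_mem h0]
    · rw [image_eq_zero_of_notMem_tsupport fun h => h0 (hζ h)]; simp
  obtain ⟨δ, hδ, hsub⟩ : ∃ δ > 0, ∀ t, ξ t ≠ 0 → δ ≤ t := by
    rcases (tsupport ξ).eq_empty_or_nonempty with he | hne
    · exact ⟨1, one_pos, fun t ht => absurd (subset_tsupport _ ht) (by simp [he])⟩
    · obtain ⟨a, ha, hl⟩ := hξs.isCompact.exists_isLeast hne
      exact ⟨a, hs ha, fun t ht => hl (subset_tsupport _ ht)⟩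
  have key := weak_convex (ε := ε) (locInt_indicator hε (H.kin_exp hC)) hξ hξs hξ0 hδ
    (fun s t hst ht => by
      have h1 := hsub t ht
      have h2 := abs_lt.1 hst
      have p1 : 0 < t - s := by linarith
      have p2 : 0 < t := by linarith
      have p3 : 0 < t + s := by linarith
      rw [indicator_of_mem (mem_Ioi.2 p1), indicator_of_mem (mem_Ioi.2 p2),
        indicator_of_mem (mem_Ioi.2 p3)]
      exact H.kin_convex hC p1 p2 p3)
  rw [hind _ hs1, hind _ hs2] at key
  have k2 := mul_nonneg hε.le key
  rw [mul_add, mul_div_cancel₀ _ hε.ne'] at k2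
  linarith

lemma right_cont (H : Setting φ ε ubar u m) :
    Tendsto (fun t => φ (u t)) (𝓝[>] (0:ℝ)) (𝓝 (φ (u 0))) := by
  rw [tendsto_order]
  constructor
  · intro y hy
    have h1 := H.lscU 0 y (by simpa using hy)
    filter_upwards [nhdsWithin_le_nhds h1, self_mem_nhdsWithin] with t ht h0
    rwa [max_eq_left (le_of_lt h0)] at ht
  · intro y hy
    filter_upwards [self_mem_nhdsWithin] with t h0
    refine lt_of_le_of_lt ?_ hy
    rw [H.phi_eq (le_of_lt h0), H.phi_eq le_rfl]
    exact EReal.coe_le_coe_iff.2 (H.en_antitone self_mem_Ici (mem_Ici.2 (le_of_lt h0)) (le_of_lt h0))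

end Setting

end WED

namespace WED

/-- Theorem 6.2, finer properties of WED minimizers for geodesically
convex energies, `λ = 0`: if `φ` is geodesically convex and `u_ε ∈ M_ε(ū)`, then
(1) `t ↦ (1/2)|u_ε'|²(t)` has a locally Lipschitz representative `w` on `(0,∞)`;
(2) `w` (hence `|u_ε'|`) and `t ↦ φ(u_ε(t))` are nonincreasing;
(3) `t ↦ φ(u_ε(t))` is (finite and) convex on `[0,∞)`;
(4) `-ε (w)'' + w' = -(φ∘u_ε)'' - w' ≤ 0` in `𝒟'(0,∞)`;
hence `t ↦ φ(u_ε(t))` is continuous on `(0,∞)` and right-continuous at `t = 0`. -/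
theorem statement19
    {X : Type*} [MetricSpace X] [CompleteSpace X]
    (σ : TopologicalSpace X) (hcomp : Compatible σ)
    (φ : X → EReal) (ustar : X) (A B : ℝ) (hφ : LSCC σ φ ustar A B)
    (hconv : GeodesicLambdaConvex φ 0)
    (ε : ℝ) (hε : 0 < ε) (hεB : B ≤ 1 / (16 * ε))
    (ubar : X) (hubar : φ ubar ≠ ⊤)
    (u : ℝ → X) (m : ℝ → ℝ) (hmin : IsMinimizer φ ε ubar u m) :
    ∃ w : ℝ → ℝ,
      (∀ᵐ t ∂(volume.restrict (Ioi (0:ℝ))), w t = 1 / 2 * m t ^ 2) ∧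
      (∀ a b : ℝ, 0 < a → a ≤ b → ∃ K : NNReal, LipschitzOnWith K w (Icc a b)) ∧
      AntitoneOn w (Ioi 0) ∧
      AntitoneOn (fun t => φ (u t)) (Ici 0) ∧
      (∀ t : ℝ, 0 ≤ t → φ (u t) ≠ ⊤) ∧
      ConvexOn ℝ (Ici 0) (fun t => (φ (u t)).toReal) ∧
      (∀ ξ : ℝ → ℝ, ContDiff ℝ (⊤ : ℕ∞) ξ → HasCompactSupport ξ → tsupport ξ ⊆ Ioi 0 →
        (-(ε * ∫ t, w t * deriv (deriv ξ) t) - ∫ t, w t * deriv ξ t) =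
          (-(∫ t, (φ (u t)).toReal * deriv (deriv ξ) t) + ∫ t, w t * deriv ξ t) ∧
        ((∀ t, 0 ≤ ξ t) →
          (-(ε * ∫ t, w t * deriv (deriv ξ) t) - ∫ t, w t * deriv ξ t) ≤ 0)) ∧
      ContinuousOn (fun t => (φ (u t)).toReal) (Ioi 0) ∧
      Tendsto (fun t => φ (u t)) (𝓝[>] (0:ℝ)) (𝓝 (φ (u 0))) := by
  have H : Setting φ ε ubar u m :=
    { hε := hε
      lsc := lsc_of_LSCC hcomp hφ
      ne_bot := hφ.ne_bot
      coer := ⟨ustar, A, B, hφ.hB, fun x => by simpa using hφ.coercive x ustar⟩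
      conv := hconv
      fin0 := hubar
      adm := hmin.1
      isMin := hmin.2 }
  obtain ⟨C, hC⟩ := H.first_integral
  refine ⟨Setting.kin φ ε u m C, H.kin_ae hC, fun a b ha _ => H.kin_lip hC ha, H.kin_anti hC,
    fun s hs t ht hst => ?_, fun t ht => H.fin ht, H.en_convex hC,
    fun ξ h1 h2 h3 => ⟨H.distrib_eq hC h1 h2 h3, fun h4 => H.distrib_ineq hC h1 h2 h3 h4⟩,
    H.en_cont hC, H.right_cont⟩
  simp only [H.phi_eq hs, H.phi_eq ht]
  exact EReal.coe_le_coe_iff.2 (H.en_antitone hs ht hst)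

end WED
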